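/- Let L be an odd unimodular lattice in dimension 43 having minimum norm 4. Then L has kissing number 9030 if and only if σ(L) = 19. -/

import Mathlib

open scoped RealInnerProductSpace

noncomputable section

/-- The norm `(x, x)` of a vector `x ∈ ℝⁿ` (squared Euclidean length). -/
def normOf {n : ℕ} (x : EuclideanSpace ℝ (Fin n)) : ℝ := ⟪x, x⟫

/-- The dual `L* = {x ∈ ℝⁿ : (x,y) ∈ ℤ for all y ∈ L}` of a set of vectors. -/
def dualSet {n : ℕ} (L : Set (EuclideanSpace ℝ (Fin n))) : Set (EuclideanSpace ℝ (Fin n)) :=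
  {x | ∀ y ∈ L, ∃ m : ℤ, ⟪x, y⟫ = (m : ℝ)}

/-- `L` is a unimodular lattice: `L = L*`. -/
def IsUnimodularLattice {n : ℕ} (L : Set (EuclideanSpace ℝ (Fin n))) : Prop :=
  L = dualSet L

/-- `L` is odd: some vector of `L` has odd (integral) norm. -/
def IsOddLattice {n : ℕ} (L : Set (EuclideanSpace ℝ (Fin n))) : Prop :=
  ∃ x ∈ L, ∃ m : ℤ, Odd m ∧ normOf x = (m : ℝ)

/-- The even sublattice `L₀ = {x ∈ L : (x,x) even}`. -/
def evenSublattice {n : ℕ} (L : Set (EuclideanSpace ℝ (Fin n))) :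
    Set (EuclideanSpace ℝ (Fin n)) :=
  {x | x ∈ L ∧ ∃ m : ℤ, normOf x = 2 * (m : ℝ)}

/-- The shadow `S(L) = L₀* \ L`. -/
def shadow {n : ℕ} (L : Set (EuclideanSpace ℝ (Fin n))) : Set (EuclideanSpace ℝ (Fin n)) :=
  dualSet (evenSublattice L) \ L

/-- `L` has minimum norm `r`: `r` is the least norm among nonzero vectors of `L`. -/
def HasMinNorm {n : ℕ} (L : Set (EuclideanSpace ℝ (Fin n))) (r : ℝ) : Prop :=
  IsLeast {s : ℝ | ∃ x ∈ L, x ≠ 0 ∧ normOf x = s} r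

/-- The shadow `S(L)` has minimum norm `r`. -/
def HasShadowMinNorm {n : ℕ} (L : Set (EuclideanSpace ℝ (Fin n))) (r : ℝ) : Prop :=
  IsLeast {s : ℝ | ∃ x ∈ shadow L, normOf x = s} r

/-- `σ(L) = r`, i.e. `4 · min(S(L)) = r`. -/
def HasSigma {n : ℕ} (L : Set (EuclideanSpace ℝ (Fin n))) (r : ℝ) : Prop :=
  ∃ s : ℝ, HasShadowMinNorm L s ∧ r = 4 * s

/-- The number of vectors of norm `r` in `L`; when `L` has minimum norm `r`,
this is the kissing number of `L`. -/
def numVecsOfNorm {n : ℕ} (L : Set (EuclideanSpace ℝ (Fin n))) (r : ℝ) : ℕ :=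
  Set.ncard {x ∈ L | normOf x = r}

/-!
Let `θ` and `θ_S` be the theta series of `L` and of its shadow; they are modular forms of weight
`43 / 2` for the theta group `Γ_θ` at its two cusps. For a suitable product `g` of Jacobi theta
functions, `θ · g / η^{24m}` is holomorphic of weight two on the upper half plane, and summing it
over the three cosets of `Γ_θ` in `SL₂(ℤ)` gives a weight two form of level one. The constant term
of such a form vanishes, because `f(τ) dτ` is a differential on the modular curve whose only pole
is at the cusp. Two choices of `g` give, with `A₄` the number of vectors of norm `4` in `L` and
`B₁`, `B₂` the numbers of vectors of norm `11/4` and `19/4` in the shadow,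
`A₄ = 9030 + 32 B₁` and `53 B₁ + B₂ = 660480`. As norms in the shadow lie in `11/4 + 2ℕ`, the
minimum norm of the shadow is `19/4` exactly when `B₁ = 0`, that is, when `A₄ = 9030`.
-/

open Complex Filter Topology Asymptotics MeasureTheory UpperHalfPlane PowerSeries Function.Periodic

local notation "ℍₒ" => upperHalfPlaneSet
local notation "I∞" => Filter.comap Complex.im Filter.atTop
local notation "𝕢" => Function.Periodic.qParam 2

section Expansions

lemma nome_eq (τ : ℂ) : 𝕢 τ = cexp (Real.pi * Complex.I * τ) := by
  rw [qParam]
  congr 1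
  push_cast
  ring

lemma nome_add_one (τ : ℂ) : 𝕢 (τ + 1) = -𝕢 τ := by
  rw [nome_eq, nome_eq, mul_add, mul_one, Complex.exp_add, exp_pi_mul_I, mul_neg_one]

lemma tendsto_nome : Tendsto 𝕢 I∞ (𝓝 0) :=
  (qParam_tendsto two_pos).mono_right nhdsWithin_le_nhds

lemma tendsto_add_one_comap_im : Tendsto (· + 1 : ℂ → ℂ) I∞ I∞ :=
  tendsto_comap_iff.2 (by simpa [Function.comp_def] using tendsto_comap)

lemma nome_pow_isBigO {M N : ℕ} (h : M ≤ N) : (𝕢 · ^ N) =O[I∞] (𝕢 · ^ M) := by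
  refine IsBigO.of_bound 1 ?_
  filter_upwards [tendsto_nome.norm.eventually_le_const (by simp : ‖(0 : ℂ)‖ < 1)] with τ hτ
  simpa using pow_le_pow_of_le_one (norm_nonneg _) hτ h

lemma aeval_nome_isBigO_one (P : Polynomial ℤ) :
    (fun τ => Polynomial.aeval (𝕢 τ) P) =O[I∞] fun _ => (1 : ℂ) :=
  ((P.continuous_aeval.tendsto 0).comp tendsto_nome).isBigO_one ℂ

/-- `f` has the expansion `f = ∑_{k < N} Fₖ 𝕢ᵏ + O(𝕢ᴺ)` at the cusp `i∞`, in the nome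
`𝕢 = exp (πiτ)`. The coefficients of `F` from `N` onwards are irrelevant. -/
def HasExpansion (N : ℕ) (f : ℂ → ℂ) (F : ℤ⟦X⟧) : Prop :=
  (fun τ => f τ - Polynomial.aeval (𝕢 τ) (trunc N F)) =O[I∞] (𝕢 · ^ N)

namespace HasExpansion

variable {N : ℕ} {f g : ℂ → ℂ} {F G : ℤ⟦X⟧}

lemma congr (hf : HasExpansion N f F) (h : trunc N F = trunc N G) : HasExpansion N f G := by
  rwa [HasExpansion, ← h]

lemma congr_fun (hf : HasExpansion N f F) (h : f =ᶠ[I∞] g) : HasExpansion N g F :=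
  IsBigO.congr' hf (h.sub .rfl) .rfl

end HasExpansion

lemma hasExpansion_aeval (N : ℕ) (P : Polynomial ℤ) :
    HasExpansion N (fun τ => Polynomial.aeval (𝕢 τ) P) P := by
  obtain ⟨R, hR⟩ : Polynomial.X ^ N ∣ P - trunc N (P : ℤ⟦X⟧) := by
    rw [Polynomial.X_pow_dvd_iff]
    intro k hk
    simp [coeff_trunc, hk]
  have hdiff (τ : ℂ) : Polynomial.aeval (𝕢 τ) P - Polynomial.aeval (𝕢 τ) (trunc N (P : ℤ⟦X⟧)) =
      𝕢 τ ^ N * Polynomial.aeval (𝕢 τ) R := by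
    rw [← map_sub, hR, map_mul, map_pow, Polynomial.aeval_X]
  simp only [HasExpansion, hdiff]
  simpa using (isBigO_refl (𝕢 · ^ N) I∞).mul (aeval_nome_isBigO_one R)

lemma hasExpansion_nome (N : ℕ) : HasExpansion N 𝕢 X := by
  simpa using hasExpansion_aeval N Polynomial.X

namespace HasExpansion

variable {N : ℕ} {f g : ℂ → ℂ} {F G : ℤ⟦X⟧}

lemma mono {M : ℕ} (hf : HasExpansion N f F) (h : M ≤ N) : HasExpansion M f F := by
  have hP := (hasExpansion_aeval M (trunc N F)).congr (trunc_trunc_of_le F h)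
  simpa [HasExpansion] using (IsBigO.trans hf (nome_pow_isBigO h)).add hP

lemma tendsto (hf : HasExpansion (N + 1) f F) : Tendsto f I∞ (𝓝 (constantCoeff F : ℤ)) := by
  have h₁ : Tendsto (fun τ => f τ - Polynomial.aeval (𝕢 τ) (trunc (N + 1) F)) I∞ (𝓝 0) :=
    IsBigO.trans_tendsto hf (by simpa using tendsto_nome.pow (N + 1))
  have h₂ := ((trunc (N + 1) F).continuous_aeval.tendsto (0 : ℂ)).comp tendsto_nome
  simpa [Function.comp_def, Polynomial.aeval_def, Polynomial.eval₂_at_zero, coeff_trunc] using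
    h₁.add h₂

lemma isBigO_one (hf : HasExpansion N f F) : f =O[I∞] fun _ => (1 : ℂ) := by
  have h := (IsBigO.trans hf (nome_pow_isBigO N.zero_le)).congr_right fun τ => pow_zero (𝕢 τ)
  exact (h.add (aeval_nome_isBigO_one (trunc N F))).congr_left fun τ => sub_add_cancel _ _

lemma add (hf : HasExpansion N f F) (hg : HasExpansion N g G) :
    HasExpansion N (fun τ => f τ + g τ) (F + G) := by
  refine (IsBigO.add hf hg).congr_left fun τ => ?_
  simp only [map_add]
  ring

lemma neg (hf : HasExpansion N f F) : HasExpansion N (fun τ => -f τ) (-F) := by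
  refine (IsBigO.neg_left hf).congr_left fun τ => ?_
  simp only [map_neg]
  ring

lemma sub (hf : HasExpansion N f F) (hg : HasExpansion N g G) :
    HasExpansion N (fun τ => f τ - g τ) (F - G) := by
  simpa only [sub_eq_add_neg] using hf.add hg.neg

lemma mul (hf : HasExpansion N f F) (hg : HasExpansion N g G) :
    HasExpansion N (fun τ => f τ * g τ) (F * G) := by
  have hP := (hasExpansion_aeval N (trunc N F * trunc N G)).congr
    (by rw [Polynomial.coe_mul, trunc_trunc_mul_trunc])
  have hfg : (fun τ => f τ * (g τ - Polynomial.aeval (𝕢 τ) (trunc N G)) +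
      (f τ - Polynomial.aeval (𝕢 τ) (trunc N F)) * Polynomial.aeval (𝕢 τ) (trunc N G))
      =O[I∞] (𝕢 · ^ N) := by
    have h₁ := hf.isBigO_one.mul (f₂ := fun τ => g τ - _) hg
    have h₂ := IsBigO.mul (f₁ := fun τ => f τ - _) hf (aeval_nome_isBigO_one (trunc N G))
    simp only [one_mul, mul_one] at h₁ h₂
    exact h₁.add h₂
  refine (hfg.add hP).congr_left fun τ => ?_
  simp only [map_mul, trunc_trunc_mul_trunc]
  ring

lemma inv (hf : HasExpansion (N + 1) f F) (h : trunc (N + 1) (F * G) = trunc (N + 1) 1) :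
    HasExpansion (N + 1) (fun τ => (f τ)⁻¹) G := by
  have hF : ((constantCoeff F : ℤ) : ℂ) ≠ 0 := by
    have h₀ := congrArg (Polynomial.coeff · 0) h
    simp only [coeff_trunc, N.succ_pos, if_true, coeff_zero_eq_constantCoeff, map_mul,
      map_one] at h₀
    exact_mod_cast left_ne_zero_of_mul_eq_one h₀
  have hinv : (fun τ => (f τ)⁻¹) =O[I∞] fun _ => (1 : ℂ) := (hf.tendsto.inv₀ hF).isBigO_one ℂ
  have hG := (hasExpansion_aeval (N + 1) (trunc (N + 1) G)).congr (trunc_trunc_of_le G le_rfl)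
  have hfG : (fun τ => f τ * Polynomial.aeval (𝕢 τ) (trunc (N + 1) G) - 1)
      =O[I∞] (𝕢 · ^ (N + 1)) := by
    simpa [HasExpansion] using (hf.mul hG).congr (h.trans (by simp : _ = trunc (N + 1) 1))
  refine ((hinv.mul hfG.neg_left).congr' ?_ (by simp))
  filter_upwards [hf.tendsto.eventually_ne hF] with τ hτ
  field_simp
  ring

lemma comp_add_one (hf : HasExpansion N f F) :
    HasExpansion N (fun τ => f (τ + 1)) (rescale (-1) F) := by
  have h := IsBigO.comp_tendsto hf tendsto_add_one_comap_im
  refine (h.congr_left fun τ => ?_).trans ?_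
  · have : trunc N (rescale (-1) F) = (trunc N F).comp (-Polynomial.X) := by
      ext k
      rw [show (-Polynomial.X : Polynomial ℤ) = Polynomial.C (-1) * Polynomial.X by simp,
        Polynomial.comp_C_mul_X_coeff]
      simp only [coeff_trunc, coeff_rescale, ite_mul, zero_mul, mul_comm (coeff k F)]
    simp [this, nome_add_one, Polynomial.aeval_comp]
  · refine IsBigO.of_norm_left (IsBigO.of_norm_right ?_)
    simpa [nome_add_one, Function.comp_def] using isBigO_refl _ _

end HasExpansion

/-- The power series with the given initial coefficients, all further ones being zero. -/
def ofList (l : List ℤ) : ℤ⟦X⟧ := PowerSeries.mk fun k => l.getD k 0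

/-- The first `N` coefficients of a product of power series, from those of the factors. -/
def mulList (N : ℕ) (a b : List ℤ) : List ℤ :=
  (List.range N).map fun k => ((List.range (k + 1)).map fun i => a.getD i 0 * b.getD (k - i) 0).sum

/-- The first `N` coefficients of a power of a power series, from those of the series. -/
def powList (N : ℕ) (a : List ℤ) (k : ℕ) : List ℤ := (mulList N a)^[k] [1]

lemma coeff_ofList (l : List ℤ) (k : ℕ) : coeff k (ofList l) = l.getD k 0 := coeff_mk _ _

lemma trunc_eq_ofList {N : ℕ} {F : ℤ⟦X⟧} {l : List ℤ} (h : ∀ k < N, coeff k F = l.getD k 0) :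
    trunc N F = trunc N (ofList l) := by
  ext k
  simp only [coeff_trunc, coeff_ofList]
  split_ifs with hk
  exacts [h k hk, rfl]

lemma trunc_ofList_mul_ofList (N : ℕ) (a b : List ℤ) :
    trunc N (ofList a * ofList b) = trunc N (ofList (mulList N a b)) := by
  ext k
  simp only [coeff_trunc]
  split_ifs with hk
  · rw [coeff_mul, Finset.Nat.sum_antidiagonal_eq_sum_range_succ_mk]
    simp [ofList, mulList, hk, ← List.sum_toFinset _ List.nodup_range, List.toFinset_range]
  · rfl

lemma HasExpansion.mul_ofList {N : ℕ} {f g : ℂ → ℂ} {a b : List ℤ}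
    (hf : HasExpansion N f (ofList a)) (hg : HasExpansion N g (ofList b)) :
    HasExpansion N (fun τ => f τ * g τ) (ofList (mulList N a b)) :=
  (hf.mul hg).congr (trunc_ofList_mul_ofList N a b)

lemma HasExpansion.pow_ofList {N : ℕ} {f : ℂ → ℂ} {a : List ℤ}
    (hf : HasExpansion N f (ofList a)) (k : ℕ) :
    HasExpansion N (fun τ => f τ ^ k) (ofList (powList N a k)) := by
  induction k with
  | zero =>
    have hone : ofList [1] = 1 := by
      ext k
      cases k <;> simp [coeff_ofList, coeff_one]
    simpa [powList, hone] using hasExpansion_aeval N 1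
  | succ k ih =>
    simpa only [powList, pow_succ', Function.iterate_succ_apply'] using hf.mul_ofList ih

end Expansions

section WeightTwo

lemma ne_zero_of_mem_upperHalfPlaneSet {τ : ℂ} (hτ : τ ∈ ℍₒ) : τ ≠ 0 := by
  rintro rfl
  simp at hτ

lemma neg_one_div_mem_upperHalfPlaneSet {τ : ℂ} (hτ : τ ∈ ℍₒ) : -1 / τ ∈ ℍₒ := by
  simpa [neg_div, inv_neg] using im_inv_neg_coe_pos ⟨τ, hτ⟩

lemma add_one_mem_upperHalfPlaneSet {τ : ℂ} (hτ : τ ∈ ℍₒ) : τ + 1 ∈ ℍₒ := by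
  simpa using hτ

lemma cayley_mem_upperHalfPlaneSet {w : ℂ} (hw : w ∈ Metric.ball (0 : ℂ) 1) :
    Complex.I * (1 + w) / (1 - w) ∈ ℍₒ := by
  have hw' : w.re * w.re + w.im * w.im < 1 := by
    rw [← normSq_apply, ← Complex.sq_norm]
    exact pow_lt_one₀ (norm_nonneg w) (by simpa using hw) two_ne_zero
  have hpos : 0 < normSq (1 - w) := normSq_pos.2 fun h => by
    simp [← sub_eq_zero.1 h] at hw
  have him : (Complex.I * (1 + w) / (1 - w)).im =
      (1 - (w.re * w.re + w.im * w.im)) / normSq (1 - w) := by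
    rw [div_im]
    simp
    field_simp
    ring
  exact (div_pos (sub_pos.2 hw') hpos).trans_eq him.symm

lemma inv_cayley_mem_ball {τ : ℂ} (hτ : τ ∈ ℍₒ) :
    (τ - Complex.I) / (τ + Complex.I) ∈ Metric.ball (0 : ℂ) 1 := by
  have hτ' : 0 < τ.im := hτ
  have hlt : ‖τ - Complex.I‖ < ‖τ + Complex.I‖ := by
    rw [← sq_lt_sq₀ (norm_nonneg _) (norm_nonneg _), Complex.sq_norm, Complex.sq_norm,
      normSq_apply, normSq_apply]
    simp
    linarith
  rw [mem_ball_zero_iff, norm_div]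
  exact (div_lt_one (hlt.trans_le' (norm_nonneg _))).2 hlt

lemma isExactOn_upperHalfPlaneSet {H : ℂ → ℂ} (hH : DifferentiableOn ℂ H ℍₒ) :
    IsExactOn H ℍₒ := by
  set φ : ℂ → ℂ := fun w => Complex.I * (1 + w) / (1 - w)
  set ψ : ℂ → ℂ := fun τ => (τ - Complex.I) / (τ + Complex.I)
  have hφ' {w : ℂ} (hw : w ≠ 1) : HasDerivAt φ (2 * Complex.I / (1 - w) ^ 2) w := by
    have h := (((hasDerivAt_id w).const_add 1).const_mul Complex.I).div
      ((hasDerivAt_id w).const_sub 1) (sub_ne_zero.2 hw.symm)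
    refine h.congr_deriv ?_
    simp only [id]
    ring
  have hne {w : ℂ} (hw : w ∈ Metric.ball (0 : ℂ) 1) : w ≠ 1 := by
    rintro rfl
    simp at hw
  have hdiff : DifferentiableOn ℂ (fun w => H (φ w) * (2 * Complex.I / (1 - w) ^ 2))
      (Metric.ball 0 1) := by
    refine (hH.comp (fun w hw => (hφ' (hne hw)).differentiableAt.differentiableWithinAt)
      fun w hw => cayley_mem_upperHalfPlaneSet hw).mul fun w hw => ?_
    have := sub_ne_zero.2 (hne hw).symm
    fun_prop (disch := simpa)
  obtain ⟨Q, hQ⟩ := hdiff.isExactOn_ball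
  refine ⟨Q ∘ ψ, fun τ hτ => ?_⟩
  have hτI : τ + Complex.I ≠ 0 :=
    ne_zero_of_mem_upperHalfPlaneSet (show 0 < (τ + Complex.I).im by simpa using add_pos hτ one_pos)
  have hψ' := ((hasDerivAt_id τ).sub_const Complex.I).div ((hasDerivAt_id τ).add_const _) hτI
  refine ((hQ _ (inv_cayley_mem_ball hτ)).comp τ hψ').congr_deriv ?_
  have hsub : 1 - ψ τ = 2 * Complex.I / (τ + Complex.I) := by
    simp only [ψ]
    field_simp
    ring
  have hφψ : φ (ψ τ) = τ := by
    simp only [φ, hsub, ψ]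
    field_simp
    ring
  simp only [id] at *
  rw [hφψ, hsub]
  field_simp
  ring

variable {P H : ℂ → ℂ}

lemma primitive_neg_one_div (hP : ∀ τ ∈ ℍₒ, HasDerivAt P (H τ) τ)
    (hS : ∀ τ ∈ ℍₒ, H (-1 / τ) = τ ^ 2 * H τ) {τ : ℂ} (hτ : τ ∈ ℍₒ) : P (-1 / τ) = P τ := by
  have hPS (τ : ℂ) (hτ : τ ∈ ℍₒ) : HasDerivAt (fun τ => P (-1 / τ)) (H τ) τ := by
    have hτ₀ := ne_zero_of_mem_upperHalfPlaneSet hτ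
    have hinv : HasDerivAt (fun τ : ℂ => -1 / τ) (1 / τ ^ 2) τ := by
      simpa [div_eq_mul_inv] using (hasDerivAt_inv hτ₀).const_mul (-1)
    refine ((hP _ (neg_one_div_mem_upperHalfPlaneSet hτ)).comp τ hinv).congr_deriv ?_
    rw [hS τ hτ]
    field_simp
  refine isOpen_upperHalfPlaneSet.eqOn_of_deriv_eq (convex_halfSpace_im_gt 0).isPreconnected
    (fun τ hτ => (hPS τ hτ).differentiableAt.differentiableWithinAt)
    (fun τ hτ => (hP τ hτ).differentiableAt.differentiableWithinAt)
    (fun τ hτ => (hPS τ hτ).deriv.trans (hP τ hτ).deriv.symm) (x := Complex.I) (by simp) ?_ hτ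
  simp [neg_div]

lemma exists_neg_one_div_eq_add_one : ∃ ρ ∈ ℍₒ, -1 / ρ = ρ + 1 := by
  have h₃ : √3 * √3 = 3 := Real.mul_self_sqrt (by norm_num)
  have hρ : (⟨-1 / 2, √3 / 2⟩ : ℂ) ∈ ℍₒ := by simp
  refine ⟨_, hρ, ?_⟩
  rw [div_eq_iff (ne_zero_of_mem_upperHalfPlaneSet hρ)]
  apply Complex.ext
  · simp
    linarith
  · simp
    ring

-- The constant `P (τ + 1) - P τ` vanishes at the elliptic point `ρ`, where `ρ + 1 = -1 / ρ`.
lemma primitive_add_one (hP : ∀ τ ∈ ℍₒ, HasDerivAt P (H τ) τ)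
    (hT : ∀ τ ∈ ℍₒ, H (τ + 1) = H τ) (hS : ∀ τ ∈ ℍₒ, H (-1 / τ) = τ ^ 2 * H τ)
    {τ : ℂ} (hτ : τ ∈ ℍₒ) : P (τ + 1) = P τ := by
  have hPT (τ : ℂ) (hτ : τ ∈ ℍₒ) : HasDerivAt (fun τ => P (τ + 1)) (H τ) τ :=
    hT τ hτ ▸ (hP _ (add_one_mem_upperHalfPlaneSet hτ)).comp_add_const τ 1
  obtain ⟨ρ, hρ, hρS⟩ := exists_neg_one_div_eq_add_one
  refine isOpen_upperHalfPlaneSet.eqOn_of_deriv_eq (convex_halfSpace_im_gt 0).isPreconnected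
    (fun τ hτ => (hPT τ hτ).differentiableAt.differentiableWithinAt)
    (fun τ hτ => (hP τ hτ).differentiableAt.differentiableWithinAt)
    (fun τ hτ => (hPT τ hτ).deriv.trans (hP τ hτ).deriv.symm) hρ ?_ hτ
  simp only [← hρS, primitive_neg_one_div hP hS hρ]

lemma eq_zero_of_tendsto_deriv {c : ℂ} (hP : ∀ τ ∈ ℍₒ, HasDerivAt P (H τ) τ)
    (hH : Tendsto H I∞ (𝓝 0)) (hper : ∀ τ ∈ ℍₒ, P (τ + 2) = P τ + 2 * c) : c = 0 := by
  by_contra hc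
  have hev : ∀ᶠ τ in I∞, ‖H τ‖ ≤ ‖c‖ / 2 :=
    hH.norm.eventually_le_const (by simpa using hc)
  rw [eventually_comap] at hev
  obtain ⟨R, hR, hR₀⟩ := (hev.and (eventually_gt_atTop 0)).exists
  have hseg : ∀ τ ∈ segment ℝ (R * Complex.I) (R * Complex.I + 2), τ.im = R := by
    intro τ hτ
    rw [segment_eq_image'] at hτ
    obtain ⟨t, -, rfl⟩ := hτ
    simp
  have hbound := (convex_segment (𝕜 := ℝ) (R * Complex.I)
    (R * Complex.I + 2)).norm_image_sub_le_of_norm_hasDerivWithin_le (C := ‖c‖ / 2)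
    (fun τ hτ => (hP τ (by simpa [hseg τ hτ])).hasDerivWithinAt)
    (fun τ hτ => hR τ (hseg τ hτ)) (left_mem_segment ℝ _ _) (right_mem_segment ℝ _ _)
  rw [hper _ (by simpa), add_sub_cancel_left, add_sub_cancel_left, norm_mul] at hbound
  have := norm_pos_iff.2 hc
  norm_num at hbound
  linarith

lemma exists_primitive_nome_zpow (m : ℤ) : ∃ R : ℂ → ℂ,
    (∀ τ, HasDerivAt R (𝕢 τ ^ m - if m = 0 then 1 else 0) τ) ∧ ∀ τ, R (τ + 2) = R τ := by
  obtain rfl | hm := eq_or_ne m 0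
  · exact ⟨0, fun τ => by simp, fun τ => rfl⟩
  have : (Real.pi * Complex.I : ℂ) ≠ 0 := by simp [Real.pi_ne_zero]
  have hderiv (τ : ℂ) : HasDerivAt 𝕢 (Real.pi * Complex.I * 𝕢 τ) τ := by
    rw [funext nome_eq]
    exact (((hasDerivAt_id τ).const_mul _).cexp).congr_deriv (by simp [mul_comm])
  refine ⟨fun τ => (m * (Real.pi * Complex.I))⁻¹ * 𝕢 τ ^ m, fun τ => ?_, fun τ => ?_⟩
  · have hq : 𝕢 τ ≠ 0 := qParam_ne_zero τ
    refine (((hasDerivAt_zpow m _ (.inl hq)).comp τ (hderiv τ)).const_mul _).congr_deriv ?_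
    rw [zpow_sub_one₀ hq, if_neg hm]
    field_simp
    simp
  · simp only [show τ + 2 = τ + 1 + 1 by ring, nome_add_one, neg_neg]

lemma coeff_eq_zero_of_primitive {M : ℕ} {F : ℤ⟦X⟧} (hP : ∀ τ ∈ ℍₒ, HasDerivAt P (H τ) τ)
    (hper : ∀ τ ∈ ℍₒ, P (τ + 2) = P τ)
    (hH : HasExpansion (M + 1) (fun τ => 𝕢 τ ^ M * H τ) F) : coeff M F = 0 := by
  choose R hR hRper using fun k : ℕ => exists_primitive_nome_zpow (k - M)
  let r : ℂ → ℂ := fun τ => ∑ k ∈ Finset.range (M + 1), coeff k F * 𝕢 τ ^ (k - M : ℤ)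
  have hr : Tendsto (fun τ => H τ - r τ) I∞ (𝓝 0) := by
    have hmul := (isBigO_refl (fun τ => (𝕢 τ ^ M)⁻¹) I∞).mul hH
    refine (hmul.congr (g₂ := 𝕢) (fun τ => ?_) fun τ => ?_).trans_tendsto tendsto_nome
    all_goals have hq : 𝕢 τ ≠ 0 := qParam_ne_zero τ
    · simp only [r, Polynomial.aeval_eq_sum_range' (natDegree_trunc_lt F M), mul_sub,
        Finset.mul_sum]
      congr 1
      · field_simp
      · refine Finset.sum_congr rfl fun k hk => ?_
        rw [coeff_trunc, if_pos (Finset.mem_range.1 hk), zsmul_eq_mul, zpow_sub₀ hq]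
        simp only [zpow_natCast]
        ring
    · rw [pow_succ]
      field_simp
  let Q : ℂ → ℂ := fun τ => P τ - ∑ k ∈ Finset.range (M + 1), coeff k F * R k τ
    - coeff M F * τ
  have hQ (τ : ℂ) (hτ : τ ∈ ℍₒ) : HasDerivAt Q (H τ - r τ) τ := by
    refine (((hP τ hτ).sub (HasDerivAt.fun_sum fun k _ => (hR k τ).const_mul _)).sub
      ((hasDerivAt_id τ).const_mul _)).congr_deriv ?_
    simp only [r, mul_sub, Finset.sum_sub_distrib, mul_ite, mul_one, mul_zero, sub_eq_zero,
      Nat.cast_inj, Finset.sum_ite_eq', Finset.mem_range, M.lt_succ_self, if_true]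
    ring
  have hQper (τ : ℂ) (hτ : τ ∈ ℍₒ) : Q (τ + 2) = Q τ + 2 * -coeff M F := by
    simp only [Q, hper τ hτ, hRper]
    ring
  exact_mod_cast neg_eq_zero.1 (eq_zero_of_tendsto_deriv hQ hr hQper)

lemma coeff_eq_zero_of_weight_two {M : ℕ} {F : ℤ⟦X⟧} (hd : DifferentiableOn ℂ H ℍₒ)
    (hT : ∀ τ ∈ ℍₒ, H (τ + 1) = H τ) (hS : ∀ τ ∈ ℍₒ, H (-1 / τ) = τ ^ 2 * H τ)
    (hH : HasExpansion (M + 1) (fun τ => 𝕢 τ ^ M * H τ) F) : coeff M F = 0 := by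
  obtain ⟨P, hP⟩ := isExactOn_upperHalfPlaneSet hd
  refine coeff_eq_zero_of_primitive hP (fun τ hτ => ?_) hH
  rw [show τ + 2 = τ + 1 + 1 by ring,
    primitive_add_one hP hT hS (add_one_mem_upperHalfPlaneSet hτ), primitive_add_one hP hT hS hτ]

-- `f(τ) + f(τ + 1) + g(τ)` is the trace of `f` from the theta group to `SL₂(ℤ)`.
lemma two_mul_coeff_add_coeff_eq_zero_of_weight_two {f g : ℂ → ℂ} {M : ℕ} {F G : ℤ⟦X⟧}
    (hM : Even M) (hf : DifferentiableOn ℂ f ℍₒ) (hg : DifferentiableOn ℂ g ℍₒ)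
    (hfT : ∀ τ ∈ ℍₒ, f (τ + 1 + 1) = f τ) (hfS : ∀ τ ∈ ℍₒ, f (-1 / τ) = τ ^ 2 * f τ)
    (hfST : ∀ τ ∈ ℍₒ, f (-1 / τ + 1) = τ ^ 2 * g τ) (hgT : ∀ τ ∈ ℍₒ, g (τ + 1) = g τ)
    (hF : HasExpansion (M + 1) (fun τ => 𝕢 τ ^ M * f τ) F)
    (hG : HasExpansion (M + 1) (fun τ => 𝕢 τ ^ M * g τ) G) :
    2 * coeff M F + coeff M G = 0 := by
  have hgS (τ : ℂ) (hτ : τ ∈ ℍₒ) : g (-1 / τ) = τ ^ 2 * f (τ + 1) := by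
    have hτ₀ := ne_zero_of_mem_upperHalfPlaneSet hτ
    have h := hfST _ (neg_one_div_mem_upperHalfPlaneSet hτ)
    rw [show -1 / (-1 / τ) = τ by field_simp] at h
    rw [h]
    field_simp
  have hfd : DifferentiableOn ℂ (fun τ => f (τ + 1)) ℍₒ :=
    hf.comp (by fun_prop) fun τ hτ => add_one_mem_upperHalfPlaneSet hτ
  have h := coeff_eq_zero_of_weight_two (M := M) (F := F + rescale (-1) F + G)
    (H := fun τ => f τ + f (τ + 1) + g τ) ((hf.add hfd).add hg)
    (fun τ hτ => by simp only [hfT τ hτ, hgT τ hτ]; ring)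
    (fun τ hτ => by simp only [hfS τ hτ, hfST τ hτ, hgS τ hτ]; ring) ?_
  · simp only [map_add, coeff_rescale, hM.neg_one_pow] at h
    linarith
  · refine ((hF.add hF.comp_add_one).add hG).congr_fun (.of_forall fun τ => ?_)
    simp only [nome_add_one, hM.neg_pow]
    ring

end WeightTwo

section NomeSeries

/-- The generating function `∑ₓ X ^ e x` of a family of exponents with finite fibres. -/
def fiberCountSeries {ι : Type*} (e : ι → ℕ) : ℤ⟦X⟧ :=
  PowerSeries.mk fun k => (Set.ncard {x | e x = k} : ℤ)

lemma norm_nome (τ : ℂ) : ‖𝕢 τ‖ = Real.exp (-(Real.pi * τ.im)) := by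
  rw [norm_qParam]
  congr 1
  ring

lemma norm_nome_le_norm_nome {σ τ : ℂ} (h : σ.im ≤ τ.im) : ‖𝕢 τ‖ ≤ ‖𝕢 σ‖ := by
  rw [norm_nome, norm_nome]
  gcongr

lemma norm_nome_lt_one {τ : ℂ} (hτ : τ ∈ ℍₒ) : ‖𝕢 τ‖ < 1 := by
  rw [norm_nome, Real.exp_lt_one_iff, neg_lt_zero]
  exact mul_pos Real.pi_pos hτ

variable {ι : Type*} {e : ι → ℕ}

lemma finite_lt_of_summable_nome_pow (hs : ∀ τ ∈ ℍₒ, Summable fun x => 𝕢 τ ^ e x) (N : ℕ) :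
    {x | e x < N}.Finite := by
  have h := (hs Complex.I (by simp)).norm.tendsto_cofinite_zero.eventually_lt_const
    (pow_pos (norm_pos_iff.2 (qParam_ne_zero (h := 2) Complex.I)) N)
  refine Set.Finite.subset h fun x hx => ?_
  simpa using pow_le_pow_of_le_one (norm_nonneg _) (norm_nome_lt_one (τ := Complex.I) (by simp)).le
    (le_of_lt hx)

lemma aeval_trunc_fiberCountSeries {N : ℕ} (hfin : {x | e x < N}.Finite) (q : ℂ) :
    Polynomial.aeval q (trunc N (fiberCountSeries e)) = ∑ x ∈ hfin.toFinset, q ^ e x := by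
  obtain rfl | hN := N.eq_zero_or_pos
  · simp
  classical
  obtain ⟨M, rfl⟩ := Nat.exists_eq_succ_of_ne_zero hN.ne'
  rw [Polynomial.aeval_eq_sum_range' (natDegree_trunc_lt _ M),
    ← Finset.sum_fiberwise_of_maps_to (t := Finset.range (M + 1)) (g := e) (by simp)]
  refine Finset.sum_congr rfl fun k hk => ?_
  have hfib : ({x ∈ hfin.toFinset | e x = k} : Set ι) = {x | e x = k} := by
    ext x
    simpa using fun hx => hx ▸ Finset.mem_range_succ_iff.1 hk
  rw [Finset.sum_congr rfl fun x hx => by rw [(Finset.mem_filter.1 hx).2], Finset.sum_const,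
    coeff_trunc, if_pos (Finset.mem_range.1 hk), fiberCountSeries, coeff_mk, ← hfib,
    ← Finset.coe_filter, Set.ncard_coe_finset]
  simp

lemma coeff_fiberCountSeries {k : ℕ} {s : Finset ι} (h : ∀ x, e x = k → x ∈ s) :
    coeff k (fiberCountSeries e) = ({x ∈ s | e x = k}.card : ℤ) := by
  rw [fiberCountSeries, coeff_mk, ← Set.ncard_coe_finset]
  congr 2
  ext x
  simpa using h x

lemma hasExpansion_tsum_nome_pow (hs : ∀ τ ∈ ℍₒ, Summable fun x => 𝕢 τ ^ e x) (N : ℕ) :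
    HasExpansion N (fun τ => ∑' x, 𝕢 τ ^ e x) (fiberCountSeries e) := by
  have hfin := finite_lt_of_summable_nome_pow hs N
  have hI := (hs Complex.I (by simp)).norm
  refine IsBigO.of_bound ((‖𝕢 Complex.I‖ ^ N)⁻¹ * ∑' x, ‖𝕢 Complex.I ^ e x‖) ?_
  filter_upwards [tendsto_comap.eventually_ge_atTop 1] with τ hτ
  rw [aeval_trunc_fiberCountSeries hfin,
    ← (hs τ (one_pos.trans_le hτ)).sum_add_tsum_subtype_compl hfin.toFinset, add_sub_cancel_left]
  have hterm (x : {x // x ∉ hfin.toFinset}) :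
      ‖𝕢 τ ^ e x‖ ≤ ‖𝕢 τ‖ ^ N * ((‖𝕢 Complex.I‖ ^ N)⁻¹ * ‖𝕢 Complex.I ^ e x‖) := by
    have hq : ‖𝕢 Complex.I‖ ≠ 0 := norm_ne_zero_iff.2 (qParam_ne_zero _)
    obtain ⟨d, hd⟩ := Nat.exists_eq_add_of_le (show N ≤ e x by simpa using x.2)
    rw [norm_pow, norm_pow, hd, pow_add, pow_add, inv_mul_cancel_left₀ (pow_ne_zero N hq)]
    gcongr
    exact norm_nome_le_norm_nome (by simpa using hτ)
  refine (tsum_of_norm_bounded (((hI.subtype _).mul_left _).mul_left _).hasSum hterm).trans ?_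
  rw [tsum_mul_left, tsum_mul_left, norm_pow, mul_comm]
  gcongr
  exact hI.tsum_subtype_le _ _ fun x => norm_nonneg _

end NomeSeries

section Eta

lemma norm_tprod_one_add_sub_one_le {ι : Type*} {f : ι → ℂ} (hf : Summable fun i => ‖f i‖) :
    ‖∏' i, (1 + f i) - 1‖ ≤ Real.exp (∑' i, ‖f i‖) - 1 := by
  refine le_of_tendsto' ((multipliable_one_add_of_summable hf).hasProd.sub_const 1).norm fun s => ?_
  refine (s.norm_prod_one_add_sub_one_le f).trans ?_
  gcongr
  exact hf.sum_le_tsum s fun i _ => norm_nonneg _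

lemma norm_tprod_one_sub_pow_sub_one_le {q : ℂ} (hq : ‖q‖ ≤ 1 / 2) (k : ℕ) :
    ‖∏' n : ℕ, (1 - q ^ (n + (k + 1))) - 1‖ ≤ 4 * ‖q‖ ^ (k + 1) := by
  have hsum : HasSum (fun n : ℕ => ‖-q ^ (n + (k + 1))‖) ((1 - ‖q‖)⁻¹ * ‖q‖ ^ (k + 1)) := by
    simpa [pow_add] using (hasSum_geometric_of_lt_one (norm_nonneg q) (by linarith)).mul_right _
  have hle : (1 - ‖q‖)⁻¹ * ‖q‖ ^ (k + 1) ≤ 2 * ‖q‖ ^ (k + 1) := by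
    gcongr
    rw [inv_le_comm₀ (by linarith) two_pos]
    linarith
  have hle_one : ‖q‖ ^ (k + 1) ≤ 1 / 2 :=
    (pow_le_of_le_one (norm_nonneg q) (by linarith) k.succ_ne_zero).trans hq
  have hexp := Real.abs_exp_sub_one_le (x := 2 * ‖q‖ ^ (k + 1))
    (by rw [abs_of_nonneg (by positivity)]; linarith)
  calc ‖∏' n : ℕ, (1 - q ^ (n + (k + 1))) - 1‖
      ≤ Real.exp (∑' n : ℕ, ‖-q ^ (n + (k + 1))‖) - 1 := by
        simpa only [sub_eq_add_neg] using norm_tprod_one_add_sub_one_le hsum.summable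
    _ ≤ Real.exp (2 * ‖q‖ ^ (k + 1)) - 1 := by rw [hsum.tsum_eq]; gcongr
    _ ≤ 2 * |2 * ‖q‖ ^ (k + 1)| := (le_abs_self _).trans hexp
    _ = 4 * ‖q‖ ^ (k + 1) := by rw [abs_of_nonneg (by positivity)]; ring

lemma tprod_one_sub_pow_sub_prod_isBigO (k : ℕ) :
    (fun q : ℂ => ∏' n : ℕ, (1 - q ^ (n + 1)) - ∏ n ∈ Finset.range k, (1 - q ^ (n + 1)))
      =O[𝓝 0] (· ^ (k + 1)) := by
  have htail : (fun q : ℂ => ∏' n : ℕ, (1 - q ^ (n + (k + 1))) - 1) =O[𝓝 0] (· ^ (k + 1)) := by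
    refine IsBigO.of_bound 4 ?_
    filter_upwards [Metric.closedBall_mem_nhds (0 : ℂ) one_half_pos] with q hq
    simpa using norm_tprod_one_sub_pow_sub_one_le (by simpa using hq) k
  have hprod : (fun q : ℂ => ∏ n ∈ Finset.range k, (1 - q ^ (n + 1))) =O[𝓝 0] fun _ => (1 : ℂ) :=
    (Continuous.tendsto (by fun_prop) 0).isBigO_one ℂ
  refine (hprod.mul htail).congr' ?_ (by simp)
  filter_upwards [Metric.ball_mem_nhds (0 : ℂ) one_pos] with q hq
  have hsum : Summable fun n : ℕ => ‖-q ^ (n + (k + 1))‖ := by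
    simpa [pow_add] using
      (summable_geometric_of_lt_one (norm_nonneg q) (by simpa using hq)).mul_right (‖q‖ ^ (k + 1))
  have hmtail : Multipliable fun n : ℕ => 1 - q ^ (n + k + 1) := by
    simpa [← sub_eq_add_neg, add_assoc] using multipliable_one_add_of_summable hsum
  rw [← Multipliable.prod_mul_tprod_nat_mul' (f := fun n : ℕ => 1 - q ^ (n + 1)) hmtail]
  simp only [add_assoc]
  ring

lemma eta_pow_eq (τ : ℂ) :
    ModularForm.eta τ ^ 24 = 𝕢 τ ^ 2 * (∏' n : ℕ, (1 - (𝕢 τ ^ 2) ^ (n + 1))) ^ 24 := by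
  have h₁ : qParam 1 τ = 𝕢 τ ^ 2 := by
    simp only [qParam, ← Complex.exp_nat_mul]
    congr 1
    push_cast
    ring
  have h₂₄ : qParam 24 τ ^ 24 = qParam 1 τ := by
    simp only [qParam, ← Complex.exp_nat_mul]
    congr 1
    push_cast
    ring
  simp only [ModularForm.eta, ModularForm.eta_q, mul_pow, h₂₄, h₁]

lemma hasExpansion_eta_pow_div :
    HasExpansion 7 (fun τ => ModularForm.eta τ ^ 24 / 𝕢 τ ^ 2)
      (ofList [1, 0, -24, 0, 252, 0, -1472]) := by
  have hprod : HasExpansion 7 (fun τ => ∏ n ∈ Finset.range 3, (1 - (𝕢 τ ^ 2) ^ (n + 1)))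
      (ofList [1, 0, -1, 0, -1, 0, 0]) := by
    refine ((hasExpansion_aeval 7
      (1 - .X ^ 2 - .X ^ 4 + .X ^ 8 + .X ^ 10 - .X ^ 12)).congr
      (trunc_eq_ofList fun k hk => ?_)).congr_fun (.of_forall fun τ => ?_)
    · rw [Polynomial.coeff_coe]
      interval_cases k <;> simp [Polynomial.coeff_X_pow, Polynomial.coeff_one]
    · simp only [Finset.prod_range_succ, Finset.prod_range_zero, map_sub, map_add, map_one,
        map_pow, Polynomial.aeval_X]
      ring
  have htail := (tprod_one_sub_pow_sub_prod_isBigO 3).comp_tendsto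
    (show Tendsto (fun τ => 𝕢 τ ^ 2) I∞ (𝓝 0) by simpa using tendsto_nome.pow 2)
  have htprod : HasExpansion 7 (fun τ => ∏' n : ℕ, (1 - (𝕢 τ ^ 2) ^ (n + 1)))
      (ofList [1, 0, -1, 0, -1, 0, 0]) := by
    have htail' := (htail.congr_right fun τ => (pow_mul (𝕢 τ) 2 4).symm).trans
      (nome_pow_isBigO (show 7 ≤ 8 by norm_num))
    exact (htail'.add hprod).congr_left fun τ => by simp
  have hpow : powList 7 [1, 0, -1, 0, -1, 0, 0] 24 = [1, 0, -24, 0, 252, 0, -1472] := by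
    decide +kernel
  refine (hpow ▸ htprod.pow_ofList 24).congr_fun (.of_forall fun τ => ?_)
  have hq : 𝕢 τ ≠ 0 := qParam_ne_zero τ
  dsimp only
  rw [eta_pow_eq, mul_div_cancel_left₀ _ (pow_ne_zero 2 hq)]

lemma hasExpansion_eta_pow_div_inv :
    HasExpansion 7 (fun τ => (ModularForm.eta τ ^ 24 / 𝕢 τ ^ 2)⁻¹)
      (ofList [1, 0, 24, 0, 324, 0, 3200]) := by
  refine hasExpansion_eta_pow_div.inv ((trunc_ofList_mul_ofList _ _ _).trans ?_)
  have hmul : mulList 7 [1, 0, -24, 0, 252, 0, -1472] [1, 0, 24, 0, 324, 0, 3200] =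
      [1, 0, 0, 0, 0, 0, 0] := by
    decide +kernel
  rw [hmul]
  refine (trunc_eq_ofList fun k hk => ?_).symm
  interval_cases k <;> simp [coeff_one]

lemma eta_pow_add_one (τ : ℂ) : ModularForm.eta (τ + 1) ^ 24 = ModularForm.eta τ ^ 24 := by
  simp only [eta_pow_eq, nome_add_one, neg_sq]

lemma eta_pow_neg_one_div {τ : ℂ} (hτ : τ ∈ ℍₒ) :
    ModularForm.eta (-1 / τ) ^ 24 = τ ^ 12 * ModularForm.eta τ ^ 24 := by
  have h := congrFun ModularForm.discriminant_S_invariant ⟨τ, hτ⟩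
  rw [ModularForm.SL_slash_apply, modular_S_smul, ModularGroup.denom_S] at h
  have hτ₀ := ne_zero_of_mem_upperHalfPlaneSet hτ
  have h' : ModularForm.eta (-1 / τ) ^ 24 * (τ ^ 12)⁻¹ = ModularForm.eta τ ^ 24 := by
    simpa [ModularForm.discriminant, zpow_neg, neg_div] using h
  rw [← h']
  field_simp

lemma differentiableOn_eta_pow : DifferentiableOn ℂ (fun τ => ModularForm.eta τ ^ 24) ℍₒ :=
  fun _ hτ =>
    ((ModularForm.differentiableAt_eta_of_mem_upperHalfPlaneSet hτ).pow 24).differentiableWithinAt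

end Eta

section Jacobi

/-- The Jacobi theta constant `θ₄ = ∑ₙ (-1)ⁿ exp (πin²τ)`, as the translate of
`θ₃ = jacobiTheta`. -/
def theta₄ (τ : ℂ) : ℂ := jacobiTheta (τ + 1)

/-- The series `∑ₙ exp (πi(n² + n)τ) = exp (-πiτ/4) θ₂(τ)`, which, unlike `θ₂`, is a power series in
the nome. -/
def theta₂Core (τ : ℂ) : ℂ := jacobiTheta₂ (τ / 2) τ

/-- The Jacobi theta constant `θ₂ = ∑ₙ exp (πi(n + 1/2)²τ)`. -/
def theta₂ (τ : ℂ) : ℂ := cexp (Real.pi * Complex.I * τ / 4) * theta₂Core τ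

/-- The automorphy factor `√(-iτ)` of the theta constants under `τ ↦ -1/τ`. -/
def thetaFactor (τ : ℂ) : ℂ := (-Complex.I * τ) ^ (1 / 2 : ℂ)

lemma thetaFactor_sq (τ : ℂ) : thetaFactor τ ^ 2 = -Complex.I * τ := by
  rw [thetaFactor, ← cpow_nat_mul]
  simp

lemma thetaFactor_ne_zero {τ : ℂ} (hτ : τ ∈ ℍₒ) : thetaFactor τ ≠ 0 := by
  rw [← pow_ne_zero_iff two_ne_zero, thetaFactor_sq]
  simpa using ne_zero_of_mem_upperHalfPlaneSet hτ

lemma jacobiTheta₂_neg_one_div {τ : ℂ} (hτ : τ ∈ ℍₒ) (z : ℂ) :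
    jacobiTheta₂ (z / τ) (-1 / τ) =
      thetaFactor τ * cexp (Real.pi * Complex.I * z ^ 2 / τ) * jacobiTheta₂ z τ := by
  have hs : thetaFactor τ * (1 / thetaFactor τ) = 1 := mul_one_div_cancel (thetaFactor_ne_zero hτ)
  have hexp : cexp (Real.pi * Complex.I * z ^ 2 / τ) * cexp (-Real.pi * Complex.I * z ^ 2 / τ) =
      1 := by
    rw [← Complex.exp_add]
    ring_nf
    exact Complex.exp_zero
  rw [jacobiTheta₂_functional_equation z τ, ← thetaFactor]
  linear_combination (-jacobiTheta₂ (z / τ) (-1 / τ)) *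
    (thetaFactor τ * (1 / thetaFactor τ) * hexp + hs)

lemma jacobiTheta_neg_one_div {τ : ℂ} (hτ : τ ∈ ℍₒ) :
    jacobiTheta (-1 / τ) = thetaFactor τ * jacobiTheta τ := by
  simpa [jacobiTheta_eq_jacobiTheta₂] using jacobiTheta₂_neg_one_div hτ 0

lemma exists_sq_add_eq_two_mul (n : ℤ) : ∃ k : ℤ, n ^ 2 + n = 2 * k := by
  obtain ⟨k, hk⟩ := Int.even_mul_succ_self n
  exact ⟨k, by linear_combination hk⟩

lemma jacobiTheta₂_add_half (z τ : ℂ) : jacobiTheta₂ (z + 1 / 2) τ = jacobiTheta₂ z (τ + 1) := by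
  refine tsum_congr fun n => Complex.exp_eq_exp_iff_exists_int.2 ?_
  obtain ⟨k, hk⟩ := exists_sq_add_eq_two_mul n
  refine ⟨n - k, ?_⟩
  have hk' : (n : ℂ) ^ 2 + n = 2 * k := by exact_mod_cast hk
  push_cast
  linear_combination (-Real.pi * Complex.I) * hk'

lemma theta₄_eq (τ : ℂ) : theta₄ τ = jacobiTheta₂ (1 / 2) τ := by
  rw [theta₄, jacobiTheta_eq_jacobiTheta₂, ← jacobiTheta₂_add_half, zero_add]

lemma theta₄_add_one (τ : ℂ) : theta₄ (τ + 1) = jacobiTheta τ := by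
  rw [theta₄, add_assoc, one_add_one_eq_two, add_comm, jacobiTheta_two_add]

lemma theta₂Core_add_one (τ : ℂ) : theta₂Core (τ + 1) = theta₂Core τ := by
  rw [theta₂Core, add_div, jacobiTheta₂_add_half, theta₂Core, add_assoc, one_add_one_eq_two,
    jacobiTheta₂_add_right]

lemma theta₄_neg_one_div {τ : ℂ} (hτ : τ ∈ ℍₒ) :
    theta₄ (-1 / τ) = thetaFactor τ * theta₂ τ := by
  have hτ₀ := ne_zero_of_mem_upperHalfPlaneSet hτ
  have h := jacobiTheta₂_neg_one_div hτ (τ / 2)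
  rw [show τ / 2 / τ = 1 / 2 by field_simp,
    show (Real.pi * Complex.I * (τ / 2) ^ 2 / τ : ℂ) = Real.pi * Complex.I * τ / 4 by
      field_simp; norm_num] at h
  rw [theta₄_eq, h, theta₂, theta₂Core, mul_assoc]

lemma theta₂_neg_one_div {τ : ℂ} (hτ : τ ∈ ℍₒ) :
    theta₂ (-1 / τ) = thetaFactor τ * theta₄ τ := by
  have hexp : cexp (Real.pi * Complex.I * (-1 / τ) / 4) *
      cexp (Real.pi * Complex.I * (1 / 2) ^ 2 / τ) = 1 := by
    rw [← Complex.exp_add]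
    ring_nf
    exact Complex.exp_zero
  rw [theta₂, theta₂Core, show -1 / τ / 2 = -(1 / 2 / τ) by ring, jacobiTheta₂_neg_left,
    jacobiTheta₂_neg_one_div hτ, theta₄_eq]
  linear_combination (thetaFactor τ * jacobiTheta₂ (1 / 2) τ) * hexp

lemma theta₂_pow_four (τ : ℂ) : theta₂ τ ^ 4 = 𝕢 τ * theta₂Core τ ^ 4 := by
  rw [theta₂, mul_pow, ← Complex.exp_nat_mul, nome_eq]
  congr 2
  push_cast
  ring

lemma theta₂_add_one_pow_four (τ : ℂ) : theta₂ (τ + 1) ^ 4 = -theta₂ τ ^ 4 := by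
  rw [theta₂_pow_four, theta₂_pow_four, theta₂Core_add_one, nome_add_one, neg_mul]

lemma jacobiTheta₂_term_zero (n : ℤ) (τ : ℂ) :
    jacobiTheta₂_term n 0 τ = 𝕢 τ ^ (n ^ 2).toNat := by
  rw [jacobiTheta₂_term, nome_eq, ← Complex.exp_nat_mul, ← Int.cast_natCast,
    Int.toNat_of_nonneg (sq_nonneg n)]
  congr 1
  push_cast
  ring

lemma jacobiTheta₂_term_half (n : ℤ) (τ : ℂ) :
    jacobiTheta₂_term n (τ / 2) τ = 𝕢 τ ^ (n ^ 2 + n).toNat := by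
  have hn : 0 ≤ n ^ 2 + n := by nlinarith [Int.le_self_sq (-n)]
  rw [jacobiTheta₂_term, nome_eq, ← Complex.exp_nat_mul, ← Int.cast_natCast,
    Int.toNat_of_nonneg hn]
  congr 1
  push_cast
  ring

lemma hasExpansion_jacobiTheta : HasExpansion 7 jacobiTheta (ofList [1, 2, 0, 0, 2, 0, 0]) := by
  have hs (τ : ℂ) (hτ : τ ∈ ℍₒ) : Summable fun n : ℤ => 𝕢 τ ^ (n ^ 2).toNat := by
    simpa only [jacobiTheta₂_term_zero] using (hasSum_jacobiTheta₂_term 0 hτ).summable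
  refine ((hasExpansion_tsum_nome_pow hs 7).congr (trunc_eq_ofList fun k hk => ?_)).congr_fun
    (.of_forall fun τ => ?_)
  · have hmem (n : ℤ) (hn : (n ^ 2).toNat = k) : n ∈ Finset.Icc (-3) 3 := by
      rw [Finset.mem_Icc, ← abs_le]
      refine abs_le_of_sq_le_sq ?_ (by norm_num)
      lia
    rw [coeff_fiberCountSeries hmem]
    interval_cases k <;> rfl
  · rw [jacobiTheta_eq_jacobiTheta₂]
    exact tsum_congr fun n => (jacobiTheta₂_term_zero n τ).symm

lemma hasExpansion_theta₂Core : HasExpansion 7 theta₂Core (ofList [2, 0, 2, 0, 0, 0, 2]) := by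
  have hs (τ : ℂ) (hτ : τ ∈ ℍₒ) : Summable fun n : ℤ => 𝕢 τ ^ (n ^ 2 + n).toNat := by
    simpa only [jacobiTheta₂_term_half] using (hasSum_jacobiTheta₂_term (τ / 2) hτ).summable
  refine ((hasExpansion_tsum_nome_pow hs 7).congr (trunc_eq_ofList fun k hk => ?_)).congr_fun
    (.of_forall fun τ => tsum_congr fun n => (jacobiTheta₂_term_half n τ).symm)
  have hmem (n : ℤ) (hn : (n ^ 2 + n).toNat = k) : n ∈ Finset.Icc (-3) 3 := by
    rw [Finset.mem_Icc]
    have : n ^ 2 + n < 7 := by lia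
    constructor <;> nlinarith
  rw [coeff_fiberCountSeries hmem]
  interval_cases k <;> rfl

lemma hasExpansion_theta₄ : HasExpansion 7 theta₄ (ofList [1, -2, 0, 0, 2, 0, 0]) := by
  refine hasExpansion_jacobiTheta.comp_add_one.congr (trunc_eq_ofList fun k hk => ?_)
  rw [coeff_rescale, coeff_ofList]
  interval_cases k <;> rfl

lemma differentiableOn_jacobiTheta : DifferentiableOn ℂ jacobiTheta ℍₒ :=
  fun _ hτ => (differentiableAt_jacobiTheta hτ).differentiableWithinAt

lemma differentiableOn_theta₄ : DifferentiableOn ℂ theta₄ ℍₒ :=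
  differentiableOn_jacobiTheta.comp (by fun_prop) fun _ hτ => add_one_mem_upperHalfPlaneSet hτ

lemma differentiableOn_theta₂ : DifferentiableOn ℂ theta₂ ℍₒ := by
  refine DifferentiableOn.mul (by fun_prop) fun τ hτ => DifferentiableAt.differentiableWithinAt ?_
  exact (hasFDerivAt_jacobiTheta₂ (τ / 2) hτ).differentiableAt.comp (f := fun τ : ℂ => (τ / 2, τ))
    τ (by fun_prop)

end Jacobi

section ThetaPairs

lemma thetaFactor_neg_one_div_sub_one_mul {τ : ℂ} (hτ : τ ∈ ℍₒ) :
    thetaFactor (-1 / τ - 1) * thetaFactor τ =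
      cexp (Real.pi * Complex.I / 4) * thetaFactor (τ + 1) := by
  have hτ₀ := ne_zero_of_mem_upperHalfPlaneSet hτ
  have hτ₁ := add_one_mem_upperHalfPlaneSet hτ
  have hσ : -1 / τ - 1 ∈ ℍₒ := by simpa using neg_one_div_mem_upperHalfPlaneSet hτ
  have hne {z : ℂ} (hz : z ∈ ℍₒ) : -Complex.I * z ≠ 0 := by
    simpa using ne_zero_of_mem_upperHalfPlaneSet hz
  have harg {z : ℂ} (hz : z ∈ ℍₒ) : |arg (-Complex.I * z)| < Real.pi / 2 :=
    abs_arg_lt_pi_div_two_iff.2 <| .inl <| by simpa using hz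
  have hστ : log (τ + 1) = log (-Complex.I * (-1 / τ - 1)) + log (-Complex.I * τ) := by
    rw [← log_mul (hne hσ) (hne hτ) _]
    · congr 1
      field_simp
      linear_combination (τ + 1) * I_sq
    · constructor <;> linarith [abs_lt.1 (harg hσ), abs_lt.1 (harg hτ)]
  have hI : log (τ + 1) = log Complex.I + log (-Complex.I * (τ + 1)) := by
    rw [← log_mul I_ne_zero (hne hτ₁) _]
    · congr 1
      linear_combination (τ + 1) * I_sq
    · rw [arg_I]
      constructor <;> linarith [abs_lt.1 (harg hτ₁), Real.pi_pos]
  rw [hI, log_I] at hστ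
  simp only [thetaFactor, cpow_def_of_ne_zero (hne hσ), cpow_def_of_ne_zero (hne hτ),
    cpow_def_of_ne_zero (hne hτ₁), ← Complex.exp_add]
  congr 1
  linear_combination (-1 / 2) * hστ

/-- `f` behaves as a modular form of weight `n / 2` for the theta group, with the multiplier of
`θ₃ⁿ` twisted by the sign `ε`, and `g` is the form it gives rise to at the cusp `-1`:
the model is `θ₃` paired with `θ₂`. -/
structure IsThetaPair (ε : ℂ) (n : ℕ) (f g : ℂ → ℂ) : Prop where
  differentiableOn_left : DifferentiableOn ℂ f ℍₒ
  differentiableOn_right : DifferentiableOn ℂ g ℍₒ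
  left_add_two : ∀ τ ∈ ℍₒ, f (τ + 1 + 1) = f τ
  left_neg_one_div : ∀ τ ∈ ℍₒ, f (-1 / τ) = ε * thetaFactor τ ^ n * f τ
  left_neg_one_div_add_one : ∀ τ ∈ ℍₒ, f (-1 / τ + 1) = ε * thetaFactor τ ^ n * g τ

namespace IsThetaPair

variable {ε ε' : ℂ} {n n' : ℕ} {f f' g g' : ℂ → ℂ}

lemma mul (h : IsThetaPair ε n f g) (h' : IsThetaPair ε' n' f' g') :
    IsThetaPair (ε * ε') (n + n') (fun τ => f τ * f' τ) (fun τ => g τ * g' τ) where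
  differentiableOn_left := h.differentiableOn_left.mul h'.differentiableOn_left
  differentiableOn_right := h.differentiableOn_right.mul h'.differentiableOn_right
  left_add_two τ hτ := by rw [h.left_add_two τ hτ, h'.left_add_two τ hτ]
  left_neg_one_div τ hτ := by
    rw [h.left_neg_one_div τ hτ, h'.left_neg_one_div τ hτ]
    ring
  left_neg_one_div_add_one τ hτ := by
    rw [h.left_neg_one_div_add_one τ hτ, h'.left_neg_one_div_add_one τ hτ]
    ring

lemma pow (h : IsThetaPair ε n f g) (k : ℕ) :
    IsThetaPair (ε ^ k) (k * n) (fun τ => f τ ^ k) (fun τ => g τ ^ k) := by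
  induction k with
  | zero => constructor <;> simp
  | succ k ih => simpa only [pow_succ, Nat.succ_mul] using ih.mul h

lemma right_add_one (h : IsThetaPair ε n f g) (hε : ε ≠ 0) {τ : ℂ} (hτ : τ ∈ ℍₒ) :
    g (τ + 1) = ε * cexp (Real.pi * Complex.I / 4) ^ n * g τ := by
  have hτ₁ := add_one_mem_upperHalfPlaneSet hτ
  have hσ : -1 / τ - 1 ∈ ℍₒ := by simpa using neg_one_div_mem_upperHalfPlaneSet hτ
  have hpoint : -1 / (τ + 1) + 1 = -1 / (-1 / τ - 1) := by
    have hτ₀ := ne_zero_of_mem_upperHalfPlaneSet hτ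
    have hτ₁₀ := ne_zero_of_mem_upperHalfPlaneSet hτ₁
    have hσ₀ : -1 - τ ≠ 0 := by
      rw [← neg_add', add_comm]
      exact neg_ne_zero.2 hτ₁₀
    field_simp
    ring
  have hne : ε * thetaFactor (τ + 1) ^ n ≠ 0 :=
    mul_ne_zero hε (pow_ne_zero n (thetaFactor_ne_zero hτ₁))
  refine mul_left_cancel₀ hne ?_
  calc ε * thetaFactor (τ + 1) ^ n * g (τ + 1)
      = f (-1 / (-1 / τ - 1)) := by rw [← h.left_neg_one_div_add_one _ hτ₁, hpoint]
    _ = ε * thetaFactor (-1 / τ - 1) ^ n * f (-1 / τ + 1) := by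
      rw [h.left_neg_one_div _ hσ, ← h.left_add_two _ hσ, sub_add_cancel]
    _ = ε * ε * (thetaFactor (-1 / τ - 1) * thetaFactor τ) ^ n * g τ := by
      rw [h.left_neg_one_div_add_one _ hτ]
      ring
    _ = _ := by
      rw [thetaFactor_neg_one_div_sub_one_mul hτ]
      ring

end IsThetaPair

lemma isThetaPair_jacobiTheta : IsThetaPair 1 1 jacobiTheta theta₂ where
  differentiableOn_left := differentiableOn_jacobiTheta
  differentiableOn_right := differentiableOn_theta₂
  left_add_two τ _ := by rw [add_assoc, one_add_one_eq_two, add_comm, jacobiTheta_two_add]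
  left_neg_one_div τ hτ := by rw [jacobiTheta_neg_one_div hτ, one_mul, pow_one]
  left_neg_one_div_add_one τ hτ := by rw [← theta₄, theta₄_neg_one_div hτ, one_mul, pow_one]

lemma isThetaPair_theta₂_pow_sub_theta₄_pow :
    IsThetaPair (-1) 4 (fun τ => theta₂ τ ^ 4 - theta₄ τ ^ 4)
      (fun τ => theta₄ τ ^ 4 + jacobiTheta τ ^ 4) where
  differentiableOn_left := (differentiableOn_theta₂.pow 4).sub (differentiableOn_theta₄.pow 4)
  differentiableOn_right := (differentiableOn_theta₄.pow 4).add (differentiableOn_jacobiTheta.pow 4)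
  left_add_two τ _ := by
    rw [theta₂_add_one_pow_four, theta₂_add_one_pow_four, theta₄_add_one, ← theta₄, neg_neg]
  left_neg_one_div τ hτ := by
    rw [theta₂_neg_one_div hτ, theta₄_neg_one_div hτ]
    ring
  left_neg_one_div_add_one τ hτ := by
    rw [theta₂_add_one_pow_four, theta₄_add_one, theta₂_neg_one_div hτ, jacobiTheta_neg_one_div hτ]
    ring

lemma isThetaPair_theta₂_pow_mul_theta₄_pow :
    IsThetaPair 1 8 (fun τ => theta₂ τ ^ 4 * theta₄ τ ^ 4)
      (fun τ => -(theta₄ τ ^ 4 * jacobiTheta τ ^ 4)) where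
  differentiableOn_left := (differentiableOn_theta₂.pow 4).mul (differentiableOn_theta₄.pow 4)
  differentiableOn_right :=
    ((differentiableOn_theta₄.pow 4).mul (differentiableOn_jacobiTheta.pow 4)).neg
  left_add_two τ _ := by
    rw [theta₂_add_one_pow_four, theta₂_add_one_pow_four, theta₄_add_one, ← theta₄, neg_neg]
  left_neg_one_div τ hτ := by
    rw [theta₂_neg_one_div hτ, theta₄_neg_one_div hτ]
    ring
  left_neg_one_div_add_one τ hτ := by
    rw [theta₂_add_one_pow_four, theta₄_add_one, theta₂_neg_one_div hτ, jacobiTheta_neg_one_div hτ]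
    ring

/-- The theta form `θ₃ᵃ (θ₂⁴ - θ₄⁴) (θ₂⁴ θ₄⁴)ʲ` of weight `(a + 4 + 8j) / 2`. -/
def testForm (a j : ℕ) (τ : ℂ) : ℂ :=
  jacobiTheta τ ^ a * (theta₂ τ ^ 4 - theta₄ τ ^ 4) * (theta₂ τ ^ 4 * theta₄ τ ^ 4) ^ j

/-- The form that `testForm a j` gives rise to at the cusp `-1`. -/
def testFormConj (a j : ℕ) (τ : ℂ) : ℂ :=
  theta₂ τ ^ a * (theta₄ τ ^ 4 + jacobiTheta τ ^ 4) * (-(theta₄ τ ^ 4 * jacobiTheta τ ^ 4)) ^ j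

lemma isThetaPair_testForm (a j : ℕ) :
    IsThetaPair (-1) (a + 4 + 8 * j) (testForm a j) (testFormConj a j) := by
  unfold testForm testFormConj
  simpa [mul_comm j 8] using ((isThetaPair_jacobiTheta.pow a).mul
    isThetaPair_theta₂_pow_sub_theta₄_pow).mul (isThetaPair_theta₂_pow_mul_theta₄_pow.pow j)

lemma neg_thetaFactor_pow (m : ℕ) (τ : ℂ) :
    -thetaFactor τ ^ (24 * m + 4) = τ ^ 2 * (τ ^ 12) ^ m := by
  have hI : (-Complex.I) ^ 12 = 1 := by
    rw [neg_pow, pow_mul Complex.I 4 3, I_pow_four]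
    norm_num
  rw [show 24 * m + 4 = 2 * (12 * m + 2) by ring, pow_mul, thetaFactor_sq, mul_pow, pow_add,
    pow_mul, hI, one_pow, one_mul, neg_sq, I_sq, pow_add, pow_mul]
  ring

lemma neg_thetaFactor_pow_mul_div_eta_pow (m : ℕ) {τ : ℂ} (hτ : τ ∈ ℍₒ) (c : ℂ) :
    -1 * thetaFactor τ ^ (24 * m + 4) * c / (ModularForm.eta (-1 / τ) ^ 24) ^ m =
      τ ^ 2 * (c / (ModularForm.eta τ ^ 24) ^ m) := by
  have hτ₀ := ne_zero_of_mem_upperHalfPlaneSet hτ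
  have hη := ModularForm.eta_ne_zero hτ
  rw [neg_one_mul, neg_thetaFactor_pow, eta_pow_neg_one_div hτ, mul_pow]
  field_simp

lemma exp_pi_mul_I_div_four_pow_four : cexp (Real.pi * Complex.I / 4) ^ 4 = -1 := by
  rw [← Complex.exp_nat_mul, ← exp_pi_mul_I]
  congr 1
  push_cast
  ring

lemma neg_exp_pi_mul_I_div_four_pow (m : ℕ) :
    -1 * cexp (Real.pi * Complex.I / 4) ^ (24 * m + 4) = 1 := by
  rw [pow_add, show 24 * m = 4 * (2 * (3 * m)) by ring, pow_mul, pow_mul,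
    exp_pi_mul_I_div_four_pow_four]
  simp

/-- Dividing by `η²⁴ᵐ` reduces the weight to `2`, where the residue theorem applies. -/
lemma IsThetaPair.two_mul_coeff_add_coeff_eq_zero {m : ℕ} {f g : ℂ → ℂ} {F G : ℤ⟦X⟧}
    (h : IsThetaPair (-1) (24 * m + 4) f g)
    (hF : HasExpansion (2 * m + 1)
      (fun τ => f τ * (ModularForm.eta τ ^ 24 / 𝕢 τ ^ 2)⁻¹ ^ m) F)
    (hG : HasExpansion (2 * m + 1)
      (fun τ => g τ * (ModularForm.eta τ ^ 24 / 𝕢 τ ^ 2)⁻¹ ^ m) G) :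
    2 * coeff (2 * m) F + coeff (2 * m) G = 0 := by
  have hη (τ : ℂ) (hτ : τ ∈ ℍₒ) : (ModularForm.eta τ ^ 24) ^ m ≠ 0 :=
    pow_ne_zero _ (pow_ne_zero _ (ModularForm.eta_ne_zero hτ))
  have hexp (f : ℂ → ℂ) (τ : ℂ) : f τ * (ModularForm.eta τ ^ 24 / 𝕢 τ ^ 2)⁻¹ ^ m =
      𝕢 τ ^ (2 * m) * (f τ / (ModularForm.eta τ ^ 24) ^ m) := by
    rw [inv_div, div_pow, pow_mul]
    ring
  simp only [hexp] at hF hG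
  refine two_mul_coeff_add_coeff_eq_zero_of_weight_two
    (f := fun τ => f τ / (ModularForm.eta τ ^ 24) ^ m)
    (g := fun τ => g τ / (ModularForm.eta τ ^ 24) ^ m) (even_two_mul m)
    (h.differentiableOn_left.div (differentiableOn_eta_pow.pow m) hη)
    (h.differentiableOn_right.div (differentiableOn_eta_pow.pow m) hη)
    (fun τ hτ => ?_) (fun τ hτ => ?_) (fun τ hτ => ?_) (fun τ hτ => ?_) hF hG
  · simp only [eta_pow_add_one, h.left_add_two τ hτ]
  · rw [h.left_neg_one_div τ hτ, neg_thetaFactor_pow_mul_div_eta_pow m hτ]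
  · rw [h.left_neg_one_div_add_one τ hτ, eta_pow_add_one, neg_thetaFactor_pow_mul_div_eta_pow m hτ]
  · rw [h.right_add_one (by simp) hτ, eta_pow_add_one, neg_exp_pi_mul_I_div_four_pow, one_mul]

end ThetaPairs

section Relations

lemma hasExpansion_nome_ofList : HasExpansion 7 𝕢 (ofList [0, 1]) := by
  refine (hasExpansion_nome 7).congr (trunc_eq_ofList fun k hk => ?_)
  rw [coeff_X]
  interval_cases k <;> rfl

lemma hasExpansion_theta₂_pow_four :
    HasExpansion 7 (fun τ => theta₂ τ ^ 4) (ofList [0, 16, 0, 64, 0, 96, 0]) := by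
  have hmul : mulList 7 [0, 1] (powList 7 [2, 0, 2, 0, 0, 0, 2] 4) = [0, 16, 0, 64, 0, 96, 0] := by
    decide +kernel
  simp only [theta₂_pow_four]
  exact hmul ▸ hasExpansion_nome_ofList.mul_ofList (hasExpansion_theta₂Core.pow_ofList 4)

lemma hasExpansion_theta₄_pow_four :
    HasExpansion 7 (fun τ => theta₄ τ ^ 4) (ofList [1, -8, 24, -32, 24, -48, 96]) := by
  have hpow : powList 7 [1, -2, 0, 0, 2, 0, 0] 4 = [1, -8, 24, -32, 24, -48, 96] := by
    decide +kernel
  exact hpow ▸ hasExpansion_theta₄.pow_ofList 4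

lemma hasExpansion_jacobiTheta_pow_four :
    HasExpansion 7 (fun τ => jacobiTheta τ ^ 4) (ofList [1, 8, 24, 32, 24, 48, 96]) := by
  have hpow : powList 7 [1, 2, 0, 0, 2, 0, 0] 4 = [1, 8, 24, 32, 24, 48, 96] := by
    decide +kernel
  exact hpow ▸ hasExpansion_jacobiTheta.pow_ofList 4

/-- The coefficients up to `𝕢⁶` of `testForm a j / (η²⁴ / 𝕢²)ᵐ`. -/
def testFormList (a j m : ℕ) : List ℤ :=
  mulList 7 (mulList 7 (mulList 7 (powList 7 [1, 2, 0, 0, 2, 0, 0] a)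
    [-1, 24, -24, 96, -24, 144, -96])
    (powList 7 (mulList 7 [0, 16, 0, 64, 0, 96, 0] [1, -8, 24, -32, 24, -48, 96]) j))
    (powList 7 [1, 0, 24, 0, 324, 0, 3200] m)

/-- The coefficients up to `𝕢⁶` of `𝕢 ^ (p - a / 4) * testFormConj a j / (η²⁴ / 𝕢²)ᵐ`. -/
def testFormConjList (p a j m : ℕ) : List ℤ :=
  mulList 7 (mulList 7 (mulList 7 (mulList 7 (powList 7 [0, 1] p)
    (powList 7 [2, 0, 2, 0, 0, 0, 2] a)) [2, 0, 48, 0, 48, 0, 192])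
    (powList 7 [-1, 0, 16, 0, -112, 0, 448] j))
    (powList 7 [1, 0, 24, 0, 324, 0, 3200] m)

lemma hasExpansion_testForm_mul (a j m : ℕ) :
    HasExpansion 7 (fun τ => testForm a j τ * (ModularForm.eta τ ^ 24 / 𝕢 τ ^ 2)⁻¹ ^ m)
      (ofList (testFormList a j m)) := by
  have hsub : HasExpansion 7 (fun τ => theta₂ τ ^ 4 - theta₄ τ ^ 4)
      (ofList [-1, 24, -24, 96, -24, 144, -96]) := by
    refine (hasExpansion_theta₂_pow_four.sub hasExpansion_theta₄_pow_four).congr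
      (trunc_eq_ofList fun k hk => ?_)
    simp only [map_sub, coeff_ofList]
    interval_cases k <;> rfl
  have hprod := hasExpansion_theta₂_pow_four.mul_ofList hasExpansion_theta₄_pow_four
  exact (((hasExpansion_jacobiTheta.pow_ofList a).mul_ofList hsub).mul_ofList
    (hprod.pow_ofList j)).mul_ofList (hasExpansion_eta_pow_div_inv.pow_ofList m)

lemma exp_mul_theta₂_pow {c : ℂ} {p a : ℕ} (h : c + a / 4 = p) (τ : ℂ) :
    cexp (Real.pi * Complex.I * τ * c) * theta₂ τ ^ a = 𝕢 τ ^ p * theta₂Core τ ^ a := by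
  rw [theta₂, mul_pow, ← Complex.exp_nat_mul, nome_eq, ← Complex.exp_nat_mul, ← mul_assoc,
    ← Complex.exp_add, ← h]
  ring_nf

lemma hasExpansion_testFormConj_mul {c : ℂ} {p a : ℕ} (h : c + a / 4 = p) (j m : ℕ) :
    HasExpansion 7 (fun τ => cexp (Real.pi * Complex.I * τ * c) * testFormConj a j τ *
      (ModularForm.eta τ ^ 24 / 𝕢 τ ^ 2)⁻¹ ^ m) (ofList (testFormConjList p a j m)) := by
  have hadd : HasExpansion 7 (fun τ => theta₄ τ ^ 4 + jacobiTheta τ ^ 4)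
      (ofList [2, 0, 48, 0, 48, 0, 192]) := by
    refine (hasExpansion_theta₄_pow_four.add hasExpansion_jacobiTheta_pow_four).congr
      (trunc_eq_ofList fun k hk => ?_)
    simp only [map_add, coeff_ofList]
    interval_cases k <;> rfl
  have hneg : HasExpansion 7 (fun τ => -(theta₄ τ ^ 4 * jacobiTheta τ ^ 4))
      (ofList [-1, 0, 16, 0, -112, 0, 448]) := by
    refine (hasExpansion_theta₄_pow_four.mul_ofList hasExpansion_jacobiTheta_pow_four).neg.congr
      (trunc_eq_ofList fun k hk => ?_)
    simp only [map_neg, coeff_ofList]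
    interval_cases k <;> rfl
  simp only [testFormConj, ← mul_assoc, exp_mul_theta₂_pow h]
  exact ((((hasExpansion_nome_ofList.pow_ofList p).mul_ofList
    (hasExpansion_theta₂Core.pow_ofList a)).mul_ofList hadd).mul_ofList
    (hneg.pow_ofList j)).mul_ofList (hasExpansion_eta_pow_div_inv.pow_ofList m)

variable {T V U : ℂ → ℂ} {F G : ℤ⟦X⟧}

lemma IsThetaPair.two_mul_coeff_add_coeff_testForm_eq_zero {n : ℕ} (h : IsThetaPair 1 n T V)
    {c : ℂ} (hV : ∀ τ, V τ = cexp (Real.pi * Complex.I * τ * c) * U τ)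
    (hF : HasExpansion 7 T F) (hG : HasExpansion 7 U G) {p a j m : ℕ} (hp : c + a / 4 = p)
    (hn : n + (a + 4 + 8 * j) = 24 * m + 4) (hm : m ≤ 3) :
    2 * coeff (2 * m) (F * ofList (testFormList a j m)) +
      coeff (2 * m) (G * ofList (testFormConjList p a j m)) = 0 := by
  have hTf := h.mul (isThetaPair_testForm a j)
  rw [one_mul, hn] at hTf
  refine hTf.two_mul_coeff_add_coeff_eq_zero ?_ ?_
  · refine ((hF.mul (hasExpansion_testForm_mul a j m)).mono (by lia)).congr_fun (.of_forall ?_)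
    exact fun τ => (mul_assoc _ _ _).symm
  · refine ((hG.mul (hasExpansion_testFormConj_mul hp j m)).mono (by lia)).congr_fun
      (.of_forall fun τ => ?_)
    simp only [hV]
    ring

lemma IsThetaPair.coeff_four_relation (h : IsThetaPair 1 43 T V)
    (hV : ∀ τ, V τ = cexp (Real.pi * Complex.I * τ * (11 / 4)) * U τ)
    (hF : HasExpansion 7 T F) (hG : HasExpansion 7 U G) :
    coeff 4 F = 9030 * coeff 0 F + 1408 * coeff 1 F + 128 * coeff 2 F + 14 * coeff 3 F +
      32 * coeff 0 G := by
  have hrel := h.two_mul_coeff_add_coeff_testForm_eq_zero hV hF hG (p := 4) (a := 5) (j := 0)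
    (m := 2) (by norm_num) (by norm_num) (by norm_num)
  have hA : testFormList 5 0 2 = [-1, 14, 128, 1408, 9030, 56336, 288512] := by decide +kernel
  have hC : testFormConjList 4 5 0 2 = [0, 0, 0, 0, 64, 0, 4928] := by decide +kernel
  simp only [hA, hC, coeff_mul, Finset.Nat.sum_antidiagonal_eq_sum_range_succ_mk, coeff_ofList,
    Finset.sum_range_succ] at hrel
  norm_num [-coeff_zero_eq_constantCoeff] at hrel
  linarith

lemma IsThetaPair.coeff_six_relation (h : IsThetaPair 1 43 T V)
    (hV : ∀ τ, V τ = cexp (Real.pi * Complex.I * τ * (11 / 4)) * U τ)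
    (hF : HasExpansion 7 T F) (hG : HasExpansion 7 U G) :
    53 * coeff 0 G + coeff 2 G = 660480 * coeff 0 F - 65024 * coeff 1 F + 4864 * coeff 2 F -
      128 * coeff 3 F := by
  have hrel := h.two_mul_coeff_add_coeff_testForm_eq_zero hV hF hG (p := 4) (a := 5) (j := 3)
    (m := 3) (by norm_num) (by norm_num) (by norm_num)
  have hA : testFormList 5 3 3 = [0, 0, 0, -4096, 155648, -2080768, 21135360] := by decide +kernel
  have hC : testFormConjList 4 5 3 3 = [0, 0, 0, 0, -64, 0, -3392] := by decide +kernel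
  simp only [hA, hC, coeff_mul, Finset.Nat.sum_antidiagonal_eq_sum_range_succ_mk, coeff_ofList,
    Finset.sum_range_succ] at hrel
  norm_num [-coeff_zero_eq_constantCoeff] at hrel
  linarith

end Relations

section PoissonSummation

lemma integral_tsum_vadd_of_isAddFundamentalDomain {G α E : Type*} [AddGroup G] [Countable G]
    [AddAction G α] [MeasurableSpace α] [MeasurableConstVAdd G α] [NormedAddCommGroup E]
    [NormedSpace ℝ E] {μ : Measure α} [VAddInvariantMeasure G α μ] {s : Set α}
    (hs : IsAddFundamentalDomain G s μ) {f : α → E} (hf : Integrable f μ) :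
    ∫ x in s, ∑' γ : G, f (γ +ᵥ x) ∂μ = ∫ x, f x ∂μ := by
  rw [hs.integral_eq_tsum'' f hf, integral_tsum]
  · exact fun γ => (hf.1.comp_measurePreserving (measurePreserving_vadd γ μ)).restrict
  · rw [← hs.lintegral_eq_tsum'' fun x => ‖f x‖ₑ]
    exact hf.2.ne

variable {ι : Type*}

/-- The projection of `ℝ^ι` onto the torus `(ℝ / ℤ)^ι`. -/
def toTorus (x : ι → ℝ) : UnitAddTorus ι := fun i => (x i : UnitAddCircle)

lemma isOpenQuotientMap_toTorus : IsOpenQuotientMap (toTorus : (ι → ℝ) → UnitAddTorus ι) :=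
  IsOpenQuotientMap.piMap fun _ => QuotientAddGroup.isOpenQuotientMap_mk

lemma toTorus_add_intCast (x : ι → ℝ) (m : ι → ℤ) :
    toTorus (x + fun i => (m i : ℝ)) = toTorus x := by
  ext i
  simp [toTorus]

lemma exists_eq_add_intCast_of_toTorus_eq {x y : ι → ℝ} (h : toTorus x = toTorus y) :
    ∃ m : ι → ℤ, y = x + fun i => (m i : ℝ) := by
  have hi (i : ι) : ∃ m : ℤ, y i = x i + m := by
    obtain ⟨m, hm⟩ := AddSubgroup.mem_zmultiples_iff.1 (QuotientAddGroup.eq.1 (congrFun h i))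
    exact ⟨m, by rw [← zsmul_one, hm, add_neg_cancel_left]⟩
  choose m hm using hi
  exact ⟨m, funext hm⟩

lemma exists_continuousMap_comp_toTorus {g : (ι → ℝ) → ℂ} (hg : Continuous g)
    (hper : ∀ (x : ι → ℝ) (m : ι → ℤ), g (x + fun i => (m i : ℝ)) = g x) :
    ∃ G : C(UnitAddTorus ι, ℂ), ∀ x, G (toTorus x) = g x := by
  have hquot : IsQuotientMap (⟨toTorus, isOpenQuotientMap_toTorus.continuous⟩ :
      C(ι → ℝ, UnitAddTorus ι)) := isOpenQuotientMap_toTorus.isQuotientMap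
  have hfac (x y : ι → ℝ) (hxy : toTorus x = toTorus y) : g x = g y := by
    obtain ⟨m, rfl⟩ := exists_eq_add_intCast_of_toTorus_eq hxy
    rw [hper]
  exact ⟨hquot.lift ⟨g, hg⟩ hfac, fun x => DFunLike.congr_fun (hquot.lift_comp ⟨g, hg⟩ hfac) x⟩

variable [Fintype ι]

lemma mFourier_toTorus (m : ι → ℤ) (x : ι → ℝ) :
    UnitAddTorus.mFourier m (toTorus x) =
      cexp (2 * Real.pi * Complex.I * ∑ i, (m i * x i : ℝ)) := by
  simp only [UnitAddTorus.mFourier, ContinuousMap.coe_mk, toTorus, fourier_coe_apply]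
  rw [← Complex.exp_sum, ofReal_sum, Finset.mul_sum]
  congr! 2 with i
  push_cast
  ring

lemma mFourierCoeff_eq_setIntegral_Ico (f : UnitAddTorus ι → ℂ) (m : ι → ℤ) :
    UnitAddTorus.mFourierCoeff f m = ∫ x in Set.univ.pi fun _ : ι => Set.Ico (0 : ℝ) 1,
      UnitAddTorus.mFourier (-m) (toTorus x) * f (toTorus x) := by
  have hset : {x : ι → ℝ | ∀ i, x i ∈ Set.Ioc (0 : ℝ) (0 + 1)} =ᵐ[volume]
      Set.univ.pi fun _ : ι => Set.Ico (0 : ℝ) 1 := by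
    have hpi : {x : ι → ℝ | ∀ i, x i ∈ Set.Ioc (0 : ℝ) (0 + 1)} =
        Set.univ.pi fun _ => Set.Ioc 0 1 := by
      ext x
      simp
    rw [hpi]
    exact Measure.univ_pi_Ioc_ae_eq_Icc.trans Measure.univ_pi_Ico_ae_eq_Icc.symm
  rw [UnitAddTorus.mFourierCoeff_eq_integral f m fun _ => 0, setIntegral_congr_set hset]
  rfl

lemma integral_tsum_add_intCast {f : (ι → ℝ) → ℂ} (hf : Integrable f) :
    ∫ x in Set.univ.pi fun _ : ι => Set.Ico (0 : ℝ) 1, ∑' m : ι → ℤ, f (x + fun i => (m i : ℝ)) =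
      ∫ x, f x := by
  let Λ := (Submodule.span ℤ (Set.range (Pi.basisFun ℝ ι))).toAddSubgroup
  let e : (ι → ℤ) ≃ Λ := ((Pi.basisFun ℝ ι).restrictScalars ℤ).equivFun.symm.toEquiv
  have : Countable Λ := e.symm.injective.countable
  have he (m : ι → ℤ) (x : ι → ℝ) : e m +ᵥ x = x + fun i => (m i : ℝ) := by
    have hcoe : (e m : ι → ℝ) = fun i => (m i : ℝ) := by
      classical
      ext i
      simp [e, Module.Basis.equivFun_symm_apply, Finset.sum_apply, Pi.single_apply]
    rw [AddSubgroup.vadd_def, vadd_eq_add, hcoe, add_comm]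
  have hdom := ZSpan.isAddFundamentalDomain' (Pi.basisFun ℝ ι) (volume : Measure (ι → ℝ))
  rw [ZSpan.fundamentalDomain_pi_basisFun] at hdom
  simp_rw [← integral_tsum_vadd_of_isAddFundamentalDomain hdom hf, ← he]
  exact integral_congr_ae (.of_forall fun x => e.tsum_eq fun γ => f (γ +ᵥ x))

lemma mFourierCoeff_eq_integral_of_eq_tsum {G : UnitAddTorus ι → ℂ} {f : (ι → ℝ) → ℂ}
    (hf : Integrable f) (hG : ∀ x, G (toTorus x) = ∑' k : ι → ℤ, f (x + fun i => (k i : ℝ)))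
    (m : ι → ℤ) :
    UnitAddTorus.mFourierCoeff G m =
      ∫ x, cexp (-(2 * Real.pi * Complex.I * ∑ i, (m i * x i : ℝ))) * f x := by
  have hchar (x : ι → ℝ) : UnitAddTorus.mFourier (-m) (toTorus x) =
      cexp (-(2 * Real.pi * Complex.I * ∑ i, (m i * x i : ℝ))) := by
    rw [mFourier_toTorus]
    simp
  have hint : Integrable fun x => UnitAddTorus.mFourier (-m) (toTorus x) * f x :=
    hf.bdd_mul (c := 1)
      ((map_continuous _).comp isOpenQuotientMap_toTorus.continuous).aestronglyMeasurable
      (.of_forall fun x => ((UnitAddTorus.mFourier (-m)).norm_coe_le_norm _).trans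
        UnitAddTorus.mFourier_norm.le)
  simp_rw [mFourierCoeff_eq_setIntegral_Ico, ← hchar, ← integral_tsum_add_intCast hint,
    toTorus_add_intCast, tsum_mul_left, hG]

theorem tsum_add_intCast_eq_tsum_integral {f : (ι → ℝ) → ℂ} (hf : Continuous f)
    (hfi : Integrable f)
    (hbound : ∀ R : ℝ, ∃ B : (ι → ℤ) → ℝ, Summable B ∧
      ∀ x : ι → ℝ, ‖x‖ ≤ R → ∀ m : ι → ℤ, ‖f (x + fun i => (m i : ℝ))‖ ≤ B m)
    (hsum : Summable fun m : ι → ℤ =>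
      ∫ x : ι → ℝ, cexp (-(2 * Real.pi * Complex.I * ∑ i, (m i * x i : ℝ))) * f x) (u : ι → ℝ) :
    ∑' m : ι → ℤ, f (u + fun i => (m i : ℝ)) = ∑' m : ι → ℤ,
      (∫ x : ι → ℝ, cexp (-(2 * Real.pi * Complex.I * ∑ i, (m i * x i : ℝ))) * f x) *
        cexp (2 * Real.pi * Complex.I * ∑ i, (m i * u i : ℝ)) := by
  have hcont : Continuous fun x => ∑' m : ι → ℤ, f (x + fun i => (m i : ℝ)) := by
    refine continuous_iff_continuousAt.2 fun x => ?_
    obtain ⟨B, hB, hfB⟩ := hbound (‖x‖ + 1)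
    refine ContinuousOn.continuousAt (s := Metric.ball 0 (‖x‖ + 1)) ?_
      (Metric.isOpen_ball.mem_nhds (by simp))
    exact continuousOn_tsum (fun m => (hf.comp (continuous_add_const _)).continuousOn) hB
      fun m y hy => hfB y (mem_ball_zero_iff.1 hy).le m
  have hper (x : ι → ℝ) (k : ι → ℤ) :
      ∑' m : ι → ℤ, f (x + (fun i => (k i : ℝ)) + fun i => (m i : ℝ)) =
        ∑' m : ι → ℤ, f (x + fun i => (m i : ℝ)) := by
    rw [← (Equiv.addLeft k).tsum_eq fun m : ι → ℤ => f (x + fun i => (m i : ℝ))]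
    congr! 3 with m
    ext i
    simp [add_assoc]
  obtain ⟨G, hG⟩ := exists_continuousMap_comp_toTorus hcont hper
  simp_rw [← mFourierCoeff_eq_integral_of_eq_tsum hfi hG] at hsum ⊢
  rw [← hG, ← (UnitAddTorus.hasSum_mFourier_series_apply_of_summable hsum _).tsum_eq]
  simp_rw [mFourier_toTorus, smul_eq_mul]

end PoissonSummation

section SelfDualLattices

variable {E : Type*} [NormedAddCommGroup E] [InnerProductSpace ℝ E] {L : Submodule ℤ E}

/-- A subgroup `L` of a Euclidean space is self-dual, or unimodular, if it consists of exactly the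
vectors whose inner products with all of `L` are integers. -/
def IsSelfDual (L : Submodule ℤ E) : Prop :=
  LinearMap.BilinForm.dualSubmodule (innerₗ E) L = L

/-- A characteristic vector of `L`: an element `w` with `⟪x, w⟫ ≡ ‖x‖²` modulo `2` for all
`x ∈ L`. -/
def IsCharacteristic (L : Submodule ℤ E) (w : E) : Prop :=
  ∀ x ∈ L, ∃ k : ℤ, ⟪x, w⟫ = ‖x‖ ^ 2 + 2 * k

namespace IsSelfDual

lemma mem_iff (hL : IsSelfDual L) {x : E} : x ∈ L ↔ ∀ y ∈ L, ∃ m : ℤ, ⟪x, y⟫ = m := by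
  conv_lhs => rw [← hL]
  simp [LinearMap.BilinForm.mem_dualSubmodule, Submodule.mem_one, eq_comm]

lemma exists_norm_sq_eq_intCast (hL : IsSelfDual L) {x : E} (hx : x ∈ L) :
    ∃ m : ℤ, ‖x‖ ^ 2 = m := by
  simpa only [real_inner_self_eq_norm_sq] using hL.mem_iff.1 hx x hx

lemma isZLattice [FiniteDimensional ℝ E] [DiscreteTopology L] (hL : IsSelfDual L) :
    IsZLattice ℝ L := by
  refine ⟨Submodule.orthogonal_eq_bot_iff.1 ((Submodule.eq_bot_iff _).2 fun v hv => ?_)⟩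
  have hline (t : ℝ) : t • v ∈ L := hL.mem_iff.2 fun y hy => ⟨0, by
    rw [real_inner_smul_left, real_inner_comm, hv y (Submodule.subset_span hy)]; simp⟩
  let f (t : ℝ) : L := ⟨t • v, hline t⟩
  have hf : Continuous f := by fun_prop
  simpa [f] using PreconnectedSpace.constant inferInstance hf (x := 1) (y := 0)

lemma exists_dual_basis [FiniteDimensional ℝ E] [DiscreteTopology L] [IsZLattice ℝ L]
    (hL : IsSelfDual L) {ι : Type*} [Finite ι] [DecidableEq ι] (b : Module.Basis ι ℤ L) :
    ∃ d : Module.Basis ι ℤ L, ∀ i j, ⟪(d i : E), b j⟫ = if j = i then 1 else 0 := by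
  have hB : (innerₗ E).Nondegenerate :=
    isSymm_inner.isRefl.nondegenerate_iff_separatingLeft.2 fun x hx => inner_self_eq_zero.1 (hx x)
  let b' := b.ofZLatticeBasis ℝ L
  let d' := LinearMap.BilinForm.dualBasis (innerₗ E) hB b'
  have hspan : Submodule.span ℤ (Set.range d') = L := by
    rw [← LinearMap.BilinForm.dualSubmodule_span_of_basis, b.ofZLatticeBasis_span ℝ, hL]
  refine ⟨(d'.restrictScalars ℤ).map (LinearEquiv.ofEq _ _ hspan), fun i j => ?_⟩
  simpa [d', b'] using LinearMap.BilinForm.apply_dualBasis_left hB b' i j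

lemma exists_isCharacteristic [FiniteDimensional ℝ E] [DiscreteTopology L] [IsZLattice ℝ L]
    (hL : IsSelfDual L) : ∃ w, IsCharacteristic L w := by
  classical
  have := ZLattice.module_free ℝ L
  have := ZLattice.module_finite ℝ L
  let b := Module.Free.chooseBasis ℤ L
  obtain ⟨d, hd⟩ := hL.exists_dual_basis b
  let w : E := ∑ i, ‖(b i : E)‖ ^ 2 • (d i : E)
  suffices h : ∀ x : L, ∃ k : ℤ, ⟪(x : E), w⟫ = ‖(x : E)‖ ^ 2 + 2 * k from
    ⟨w, fun x hx => h ⟨x, hx⟩⟩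
  intro x
  have hx : x ∈ Submodule.span ℤ (Set.range b) := b.span_eq ▸ Submodule.mem_top
  induction hx using Submodule.span_induction with
  | mem x hx =>
    obtain ⟨j, rfl⟩ := hx
    exact ⟨0, by simp [w, inner_sum, inner_smul_right, real_inner_comm, hd]⟩
  | zero => exact ⟨0, by simp⟩
  | add x y _ _ hx hy =>
    obtain ⟨k, hk⟩ := hx
    obtain ⟨l, hl⟩ := hy
    obtain ⟨m, hm⟩ := hL.mem_iff.1 x.2 y y.2
    refine ⟨k + l - m, ?_⟩
    rw [Submodule.coe_add, inner_add_left, hk, hl, norm_add_sq_real, hm]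
    push_cast
    ring
  | smul a x _ hx =>
    obtain ⟨k, hk⟩ := hx
    obtain ⟨m, hm⟩ := hL.exists_norm_sq_eq_intCast x.2
    obtain ⟨l, hl⟩ := (Int.even_mul_pred_self a).two_dvd
    have ha : (a : ℝ) * (a - 1) = 2 * l := mod_cast hl
    refine ⟨a * k - l * m, ?_⟩
    rw [Submodule.coe_smul, ← Int.cast_smul_eq_zsmul ℝ a, real_inner_smul_left, hk, norm_smul,
      mul_pow, hm, Real.norm_eq_abs, sq_abs]
    push_cast
    linear_combination (-m : ℝ) * ha

end IsSelfDual

lemma IsCharacteristic.mem {w : E} (hw : IsCharacteristic L w) (hL : IsSelfDual L) : w ∈ L := by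
  refine hL.mem_iff.2 fun x hx => ?_
  obtain ⟨k, hk⟩ := hw x hx
  obtain ⟨m, hm⟩ := hL.exists_norm_sq_eq_intCast hx
  exact ⟨m + 2 * k, by rw [real_inner_comm, hk, hm]; push_cast; rfl⟩

lemma IsCharacteristic.two_smul_add {w x : E} (hw : IsCharacteristic L w) (hL : IsSelfDual L)
    (hx : x ∈ L) : IsCharacteristic L ((2 : ℝ) • x + w) := fun y hy => by
  obtain ⟨k, hk⟩ := hw y hy
  obtain ⟨m, hm⟩ := hL.mem_iff.1 hy x hx
  refine ⟨k + m, ?_⟩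
  rw [inner_add_right, real_inner_smul_right, hk, hm]
  push_cast
  ring

lemma discreteTopology_of_le_norm_sq {E : Type*} [NormedAddCommGroup E] {L : Submodule ℤ E} {r : ℝ}
    (hr : 0 < r) (hmin : ∀ x ∈ L, x ≠ 0 → r ≤ ‖x‖ ^ 2) : DiscreteTopology L := by
  refine discreteTopology_of_isOpen_singleton_zero
    (Metric.isOpen_singleton_iff.2 ⟨√r, Real.sqrt_pos.2 hr, fun x hx => ?_⟩)
  by_contra hx₀
  rw [dist_zero_right, Real.lt_sqrt (norm_nonneg _)] at hx
  exact (hmin x x.2 (by simpa using hx₀)).not_gt hx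

end SelfDualLattices

section LatticeTheta

variable {E : Type*} [NormedAddCommGroup E]

lemma exp_neg_mul_norm_add_sq_le {a : ℝ} (ha : 0 ≤ a) (x v : E) :
    Real.exp (-(a * ‖x + v‖ ^ 2)) ≤ Real.exp (a * ‖v‖ ^ 2) * Real.exp (-(a / 2 * ‖x‖ ^ 2)) := by
  have hsq : ‖x‖ ^ 2 ≤ 2 * (‖x + v‖ ^ 2 + ‖v‖ ^ 2) := calc
    ‖x‖ ^ 2 ≤ (‖x + v‖ + ‖v‖) ^ 2 := by
      gcongr
      simpa using norm_sub_le (x + v) v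
    _ ≤ 2 * (‖x + v‖ ^ 2 + ‖v‖ ^ 2) := add_sq_le
  rw [← Real.exp_add, Real.exp_le_exp]
  linarith [mul_le_mul_of_nonneg_left hsq ha]

/-- The theta series `∑ₓ exp(π i τ ‖x + v‖²)` of the translate `L + v`. -/
def latticeTheta (L : Submodule ℤ E) (v : E) (τ : ℂ) : ℂ :=
  ∑' x : L, cexp (Real.pi * Complex.I * τ * (‖(x : E) + v‖ ^ 2 : ℝ))

lemma norm_cexp_pi_mul_I_mul (τ : ℂ) (r : ℝ) :
    ‖cexp (Real.pi * Complex.I * τ * r)‖ = Real.exp (-(Real.pi * τ.im * r)) := by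
  simp [Complex.norm_exp]

variable [NormedSpace ℝ E] [FiniteDimensional ℝ E] (L : Submodule ℤ E) [DiscreteTopology L]

lemma summable_exp_neg_mul_norm_sq {a : ℝ} (ha : 0 < a) :
    Summable fun x : L => Real.exp (-(a * ‖(x : E)‖ ^ 2)) := by
  set d := Module.finrank ℤ L + 1
  refine Summable.of_norm_bounded_eventually
    ((ZLattice.summable_norm_pow_inv L (2 * d) (by omega)).mul_left (d.factorial / a ^ d)) ?_
  filter_upwards [eventually_cofinite_ne (0 : L)] with x hx
  have hx : 0 < ‖(x : E)‖ := norm_pos_iff.2 (by simpa using hx)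
  rw [← AddSubgroupClass.coe_norm, Real.norm_of_nonneg (Real.exp_nonneg _), Real.exp_neg]
  calc (Real.exp (a * ‖(x : E)‖ ^ 2))⁻¹
      ≤ ((a * ‖(x : E)‖ ^ 2) ^ d / d.factorial)⁻¹ :=
        inv_anti₀ (by positivity) (Real.pow_div_factorial_le_exp _ (by positivity) d)
    _ = d.factorial / a ^ d * ‖(x : E)‖⁻¹ ^ (2 * d) := by
      rw [mul_pow, ← pow_mul, inv_div, inv_pow]
      field_simp

lemma summable_exp_neg_mul_norm_add_sq {a : ℝ} (ha : 0 < a) (v : E) :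
    Summable fun x : L => Real.exp (-(a * ‖(x : E) + v‖ ^ 2)) :=
  .of_nonneg_of_le (fun _ => Real.exp_nonneg _) (fun _ => exp_neg_mul_norm_add_sq_le ha.le _ v)
    ((summable_exp_neg_mul_norm_sq L (half_pos ha)).mul_left _)

variable (v : E)

lemma differentiableOn_latticeTheta : DifferentiableOn ℂ (latticeTheta L v) ℍₒ := by
  intro τ hτ
  have hτ₂ : τ.im / 2 < τ.im := half_lt_self hτ
  have hopen : IsOpen {z : ℂ | τ.im / 2 < z.im} := isOpen_lt continuous_const continuous_im
  refine (DifferentiableOn.differentiableAt ?_ (hopen.mem_nhds hτ₂)).differentiableWithinAt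
  refine differentiableOn_tsum_of_summable_norm
    (summable_exp_neg_mul_norm_add_sq L (mul_pos Real.pi_pos (half_pos hτ)) v)
    (fun x => by fun_prop) hopen fun x z hz => ?_
  rw [norm_cexp_pi_mul_I_mul]
  gcongr
  exact le_of_lt hz

lemma latticeTheta_I_ne_zero : latticeTheta L v Complex.I ≠ 0 := by
  have hreal : latticeTheta L v Complex.I =
      (∑' x : L, Real.exp (-(Real.pi * ‖(x : E) + v‖ ^ 2)) : ℝ) := by
    rw [latticeTheta, ofReal_tsum]
    congr! 2 with x
    rw [ofReal_exp]
    congr 1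
    push_cast
    linear_combination (Real.pi * ‖(x : E) + v‖ ^ 2) * I_sq
  rw [hreal, ofReal_ne_zero]
  exact ((summable_exp_neg_mul_norm_add_sq L Real.pi_pos v).tsum_pos
    (fun _ => Real.exp_nonneg _) 0 (Real.exp_pos _)).ne'

end LatticeTheta

section HaarTransport

variable {E F : Type*} [NormedAddCommGroup E] [NormedSpace ℝ E] [FiniteDimensional ℝ E]
  [MeasurableSpace E] [BorelSpace E] [NormedAddCommGroup F] [NormedSpace ℝ F]
  [MeasurableSpace F] [BorelSpace F] {μ : Measure F} [μ.IsAddHaarMeasure]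
  {ν : Measure E} [ν.IsAddHaarMeasure]

lemma integrable_comp_continuousLinearEquiv {g : E → ℂ} (hg : Integrable g ν) (e : F ≃L[ℝ] E) :
    Integrable (fun u => g (e u)) μ := by
  have := e.isAddHaarMeasure_map μ
  have hmap := Measure.isAddLeftInvariant_eq_smul (μ.map e) ν
  exact e.toHomeomorph.measurableEmbedding.integrable_map_iff.1
    (show Integrable g (μ.map e) from hmap ▸ hg.smul_measure_nnreal)

lemma exists_integral_comp_continuousLinearEquiv (e : F ≃L[ℝ] E) :
    ∃ c : ℂ, ∀ g : E → ℂ, ∫ u, g (e u) ∂μ = c * ∫ y, g y ∂ν := by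
  have := e.isAddHaarMeasure_map μ
  refine ⟨(μ.map e).addHaarScalarFactor ν, fun g => ?_⟩
  calc ∫ u, g (e u) ∂μ = ∫ y, g y ∂μ.map e :=
        (e.toHomeomorph.measurableEmbedding.integral_map g).symm
    _ = ∫ y, g y ∂((μ.map e).addHaarScalarFactor ν • ν) :=
        congrArg (fun ρ => ∫ y, g y ∂ρ) (Measure.isAddLeftInvariant_eq_smul _ _)
    _ = (μ.map e).addHaarScalarFactor ν * ∫ y, g y ∂ν := by
      rw [integral_smul_nnreal_measure, NNReal.smul_def, real_smul]

end HaarTransport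

section ThetaInversion

variable {E : Type*} [NormedAddCommGroup E] [InnerProductSpace ℝ E] [FiniteDimensional ℝ E]

lemma integral_cexp_mul_cexp_pi_mul_norm_sq [MeasurableSpace E] [BorelSpace E] {τ : ℂ}
    (hτ : τ ∈ ℍₒ) (p : E) :
    ∫ x : E, cexp (-(2 * Real.pi * Complex.I * ⟪p, x⟫)) *
        cexp (Real.pi * Complex.I * τ * (‖x‖ ^ 2 : ℝ)) =
      (thetaFactor τ ^ Module.finrank ℝ E)⁻¹ *
        cexp (Real.pi * Complex.I * (-1 / τ) * (‖p‖ ^ 2 : ℝ)) := by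
  have hτ₀ := ne_zero_of_mem_upperHalfPlaneSet hτ
  have hβ : 0 < (-(Real.pi * Complex.I * τ)).re := by simpa using mul_pos Real.pi_pos hτ
  have hgauss := GaussianFourier.integral_cexp_neg_mul_sq_norm_add hβ (-(2 * Real.pi * Complex.I)) p
  have hfactor : ((Real.pi : ℂ) / -(Real.pi * Complex.I * τ)) ^ (Module.finrank ℝ E / 2 : ℂ) =
      (thetaFactor τ ^ Module.finrank ℝ E)⁻¹ := by
    rw [show (Real.pi : ℂ) / -(Real.pi * Complex.I * τ) = (-Complex.I * τ)⁻¹ by field_simp,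
      inv_cpow, thetaFactor, ← cpow_nat_mul]
    · congr 2
      ring
    · exact fun harg => lt_asymm hτ (by simpa using (arg_eq_pi_iff.1 harg).1)
  rw [hfactor] at hgauss
  convert hgauss using 2
  · funext x
    rw [← Complex.exp_add]
    congr 1
    push_cast
    ring
  · congr 1
    push_cast
    field_simp
    ring

lemma thetaFactor_I : thetaFactor Complex.I = 1 := by
  simp [thetaFactor]

variable (L : Submodule ℤ E) [DiscreteTopology L]

lemma exists_summable_bound_exp_neg_mul_norm_add_sq {a : ℝ} (ha : 0 < a) (R : ℝ) :
    ∃ B : L → ℝ, Summable B ∧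
      ∀ v : E, ‖v‖ ≤ R → ∀ x : L, Real.exp (-(a * ‖(x : E) + v‖ ^ 2)) ≤ B x := by
  refine ⟨_, (summable_exp_neg_mul_norm_sq L (half_pos ha)).mul_left (Real.exp (a * R ^ 2)),
    fun v hv x => (exp_neg_mul_norm_add_sq_le ha.le (x : E) v).trans ?_⟩
  gcongr

lemma summable_cexp_pi_mul_norm_sq {τ : ℂ} (hτ : τ ∈ ℍₒ) :
    Summable fun x : L => cexp (Real.pi * Complex.I * τ * (‖(x : E)‖ ^ 2 : ℝ)) := by
  refine .of_norm ?_
  simpa only [norm_cexp_pi_mul_I_mul] using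
    summable_exp_neg_mul_norm_sq L (mul_pos Real.pi_pos hτ)

variable {L}
variable [IsZLattice ℝ L] {ι : Type*} [Fintype ι]

/-- The linear coordinates on `E` given by a `ℤ`-basis of a lattice in `E`. -/
def latticeCoords (b : Module.Basis ι ℤ L) : (ι → ℝ) ≃L[ℝ] E :=
  (b.ofZLatticeBasis ℝ L).equivFunL.symm

lemma latticeCoords_apply (b : Module.Basis ι ℤ L) (u : ι → ℝ) :
    latticeCoords b u = ∑ i, u i • (b i : E) := by
  exact ((b.ofZLatticeBasis ℝ L).equivFun_symm_apply u).trans (by simp)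

lemma latticeCoords_intCast (b : Module.Basis ι ℤ L) (m : ι → ℤ) :
    latticeCoords b (fun i => (m i : ℝ)) = (b.equivFun.symm m : E) := by
  simp [latticeCoords_apply, Module.Basis.equivFun_symm_apply, Int.cast_smul_eq_zsmul]

lemma inner_equivFun_symm_latticeCoords [DecidableEq ι] {b d : Module.Basis ι ℤ L}
    (hd : ∀ i j, ⟪(d i : E), b j⟫ = if j = i then 1 else 0) (m : ι → ℤ) (u : ι → ℝ) :
    ⟪(d.equivFun.symm m : E), latticeCoords b u⟫ = ∑ i, m i * u i := by
  rw [← latticeCoords_intCast]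
  simp [latticeCoords_apply, sum_inner, inner_sum, real_inner_smul_left, inner_smul_right, hd,
    mul_comm]

lemma integrable_cexp_pi_mul_norm_latticeCoords_sq {τ : ℂ} (hτ : τ ∈ ℍₒ)
    (b : Module.Basis ι ℤ L) :
    Integrable fun u : ι → ℝ =>
      cexp (Real.pi * Complex.I * τ * (‖latticeCoords b u‖ ^ 2 : ℝ)) := by
  borelize E
  have hβ : 0 < (-(Real.pi * Complex.I * τ)).re := by simpa using mul_pos Real.pi_pos hτ
  have hE := GaussianFourier.integrable_cexp_neg_mul_sq_norm_add hβ 0 (0 : E)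
  simpa using integrable_comp_continuousLinearEquiv (μ := volume) hE (latticeCoords b)

lemma exists_summable_bound_cexp_pi_mul_norm_latticeCoords_sq {τ : ℂ} (hτ : τ ∈ ℍₒ)
    (b : Module.Basis ι ℤ L) (R : ℝ) :
    ∃ B : (ι → ℤ) → ℝ, Summable B ∧ ∀ u : ι → ℝ, ‖u‖ ≤ R → ∀ m : ι → ℤ,
      ‖cexp (Real.pi * Complex.I * τ *
        (‖latticeCoords b (u + fun i => (m i : ℝ))‖ ^ 2 : ℝ))‖ ≤ B m := by
  set C := ‖(latticeCoords b : (ι → ℝ) →L[ℝ] E)‖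
  obtain ⟨B, hB, hle⟩ := exists_summable_bound_exp_neg_mul_norm_add_sq L
    (mul_pos Real.pi_pos hτ) (C * R)
  refine ⟨B ∘ b.equivFun.symm, (b.equivFun.symm.toEquiv.summable_iff).2 hB, fun u hu m => ?_⟩
  rw [norm_cexp_pi_mul_I_mul, map_add, add_comm, latticeCoords_intCast]
  exact hle _ (((latticeCoords b : (ι → ℝ) →L[ℝ] E).le_opNorm u).trans (by gcongr)) _

lemma exists_integral_cexp_mul_cexp_latticeCoords [DecidableEq ι] {b d : Module.Basis ι ℤ L}
    (hd : ∀ i j, ⟪(d i : E), b j⟫ = if j = i then 1 else 0) :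
    ∃ c : ℂ, ∀ τ ∈ ℍₒ, ∀ m : ι → ℤ,
      ∫ u : ι → ℝ, cexp (-(2 * Real.pi * Complex.I * ∑ i, (m i * u i : ℝ))) *
          cexp (Real.pi * Complex.I * τ * (‖latticeCoords b u‖ ^ 2 : ℝ)) =
        c * (thetaFactor τ ^ Module.finrank ℝ E)⁻¹ *
          cexp (Real.pi * Complex.I * (-1 / τ) * (‖(d.equivFun.symm m : E)‖ ^ 2 : ℝ)) := by
  borelize E
  obtain ⟨c, hc⟩ := exists_integral_comp_continuousLinearEquiv (μ := volume) (ν := volume)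
    (latticeCoords b)
  refine ⟨c, fun τ hτ m => ?_⟩
  rw [mul_assoc c, ← integral_cexp_mul_cexp_pi_mul_norm_sq hτ, ← hc]
  simp only [inner_equivFun_symm_latticeCoords hd]

lemma exists_thetaFactor_pow_mul_latticeTheta_eq (hL : IsSelfDual L) :
    ∃ c : ℂ, ∀ τ ∈ ℍₒ, ∀ v : E, thetaFactor τ ^ Module.finrank ℝ E * latticeTheta L v τ =
      c * ∑' x : L, cexp (Real.pi * Complex.I * (-1 / τ) * (‖(x : E)‖ ^ 2 : ℝ)) *
        cexp (2 * Real.pi * Complex.I * ⟪(x : E), v⟫) := by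
  classical
  have := ZLattice.module_free ℝ L
  have := ZLattice.module_finite ℝ L
  let b := Module.Free.chooseBasis ℤ L
  obtain ⟨d, hd⟩ := hL.exists_dual_basis b
  obtain ⟨c, hc⟩ := exists_integral_cexp_mul_cexp_latticeCoords hd
  refine ⟨c, fun τ hτ v => ?_⟩
  have hsummable := summable_cexp_pi_mul_norm_sq L (neg_one_div_mem_upperHalfPlaneSet hτ)
  have hpoisson := tsum_add_intCast_eq_tsum_integral (by fun_prop)
    (integrable_cexp_pi_mul_norm_latticeCoords_sq hτ b)
    (exists_summable_bound_cexp_pi_mul_norm_latticeCoords_sq hτ b)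
    (by
      simp only [hc τ hτ]
      exact ((d.equivFun.symm.toEquiv.summable_iff).2 hsummable).mul_left _)
    ((latticeCoords b).symm v)
  simp only [hc τ hτ, mul_assoc (c * _), tsum_mul_left] at hpoisson
  simp only [map_add, latticeCoords_intCast, ContinuousLinearEquiv.apply_symm_apply,
    ← inner_equivFun_symm_latticeCoords hd, add_comm v] at hpoisson
  have htheta := hpoisson.symm.trans (b.equivFun.symm.toEquiv.tsum_eq fun x : L =>
    cexp (Real.pi * Complex.I * τ * (‖(x : E) + v‖ ^ 2 : ℝ)))
  have hdual := d.equivFun.symm.toEquiv.tsum_eq fun x : L =>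
    cexp (Real.pi * Complex.I * (-1 / τ) * (‖(x : E)‖ ^ 2 : ℝ)) *
      cexp (2 * Real.pi * Complex.I * ⟪(x : E), v⟫)
  rw [latticeTheta, ← htheta, ← hdual]
  have hfactor := pow_ne_zero (Module.finrank ℝ E) (thetaFactor_ne_zero hτ)
  simp only [LinearEquiv.coe_toEquiv]
  field_simp

theorem thetaFactor_pow_mul_latticeTheta (hL : IsSelfDual L) {τ : ℂ} (hτ : τ ∈ ℍₒ) (v : E) :
    thetaFactor τ ^ Module.finrank ℝ E * latticeTheta L v τ =
      ∑' x : L, cexp (Real.pi * Complex.I * (-1 / τ) * (‖(x : E)‖ ^ 2 : ℝ)) *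
        cexp (2 * Real.pi * Complex.I * ⟪(x : E), v⟫) := by
  obtain ⟨c, hc⟩ := exists_thetaFactor_pow_mul_latticeTheta_eq hL
  -- The fixed point `τ = i` of the inversion gives `c = 1`, so the covolume need not be computed.
  have hI := hc Complex.I (by simp [upperHalfPlaneSet]) 0
  simp only [thetaFactor_I, one_pow, one_mul, inner_zero_right, ofReal_zero, mul_zero,
    Complex.exp_zero, mul_one, div_I, neg_mul, neg_neg] at hI
  have hc₁ : c = 1 := by
    refine mul_right_cancel₀ (latticeTheta_I_ne_zero L 0) ?_
    simpa [latticeTheta] using hI.symm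
  rw [hc τ hτ v, hc₁, one_mul]

end ThetaInversion

section CharacteristicNorms

variable {E : Type*} [NormedAddCommGroup E] [InnerProductSpace ℝ E] {L : Submodule ℤ E} {w : E}

lemma cexp_pi_mul_I_mul_norm_half_smul_add_sq (hL : IsSelfDual L) (hw : IsCharacteristic L w)
    {x : E} (hx : x ∈ L) :
    cexp (Real.pi * Complex.I * (‖x + (1 / 2 : ℝ) • w‖ ^ 2 : ℝ)) =
      cexp (Real.pi * Complex.I * (‖(1 / 2 : ℝ) • w‖ ^ 2 : ℝ)) := by
  obtain ⟨k, hk⟩ := hw x hx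
  obtain ⟨m, hm⟩ := hL.exists_norm_sq_eq_intCast hx
  refine Complex.exp_eq_exp_iff_exists_int.2 ⟨m + k, ?_⟩
  rw [norm_add_sq_real, inner_smul_right, hk, hm]
  push_cast
  ring

lemma latticeTheta_half_smul_add_one (hL : IsSelfDual L) (hw : IsCharacteristic L w) (τ : ℂ) :
    latticeTheta L ((1 / 2 : ℝ) • w) (τ + 1) =
      cexp (Real.pi * Complex.I * (‖(1 / 2 : ℝ) • w‖ ^ 2 : ℝ)) *
        latticeTheta L ((1 / 2 : ℝ) • w) τ := by
  rw [latticeTheta, latticeTheta, ← tsum_mul_left]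
  refine tsum_congr fun x => ?_
  rw [← cexp_pi_mul_I_mul_norm_half_smul_add_sq hL hw x.2, ← Complex.exp_add]
  ring_nf

lemma cexp_two_pi_mul_I_mul_inner_half_smul (hw : IsCharacteristic L w) {x : E} (hx : x ∈ L) :
    cexp (2 * Real.pi * Complex.I * ⟪x, (1 / 2 : ℝ) • w⟫) =
      cexp (Real.pi * Complex.I * (‖x‖ ^ 2 : ℝ)) := by
  obtain ⟨k, hk⟩ := hw x hx
  refine Complex.exp_eq_exp_iff_exists_int.2 ⟨k, ?_⟩
  rw [inner_smul_right, hk]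
  push_cast
  ring

variable [FiniteDimensional ℝ E] [DiscreteTopology L] [IsZLattice ℝ L]

theorem isThetaPair_latticeTheta (hL : IsSelfDual L) (hw : IsCharacteristic L w) :
    IsThetaPair 1 (Module.finrank ℝ E) (latticeTheta L 0) (latticeTheta L ((1 / 2 : ℝ) • w)) where
  differentiableOn_left := differentiableOn_latticeTheta L 0
  differentiableOn_right := differentiableOn_latticeTheta L _
  left_add_two τ _ := tsum_congr fun x => by
    obtain ⟨m, hm⟩ := hL.exists_norm_sq_eq_intCast x.2
    refine Complex.exp_eq_exp_iff_exists_int.2 ⟨m, ?_⟩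
    rw [add_zero, hm]
    push_cast
    ring
  left_neg_one_div τ hτ := by
    rw [one_mul, thetaFactor_pow_mul_latticeTheta hL hτ, latticeTheta]
    simp
  left_neg_one_div_add_one τ hτ := by
    rw [one_mul, thetaFactor_pow_mul_latticeTheta hL hτ, latticeTheta]
    refine tsum_congr fun x => ?_
    rw [cexp_two_pi_mul_I_mul_inner_half_smul hw x.2, ← Complex.exp_add, add_zero]
    ring_nf

namespace IsCharacteristic

/-- Van der Blij's lemma. -/
theorem exists_norm_sq_eq_finrank_add (hw : IsCharacteristic L w) (hL : IsSelfDual L) :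
    ∃ k : ℤ, ‖w‖ ^ 2 = Module.finrank ℝ E + 8 * k := by
  have hI : latticeTheta L ((1 / 2 : ℝ) • w) Complex.I ≠ 0 := latticeTheta_I_ne_zero L _
  have h := (isThetaPair_latticeTheta hL hw).right_add_one one_ne_zero (τ := Complex.I) (by simp)
  rw [latticeTheta_half_smul_add_one hL hw, one_mul, mul_left_inj' hI, ← Complex.exp_nat_mul,
    Complex.exp_eq_exp_iff_exists_int] at h
  obtain ⟨k, hk⟩ := h
  refine ⟨k, ?_⟩
  rw [norm_smul, mul_pow] at hk
  have hπ : (Real.pi * Complex.I : ℂ) ≠ 0 := mul_ne_zero (by simp) I_ne_zero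
  have : ((‖w‖ ^ 2 : ℝ) : ℂ) = (Module.finrank ℝ E + 8 * k : ℝ) := by
    refine mul_left_cancel₀ hπ ?_
    push_cast [Real.norm_eq_abs] at hk ⊢
    norm_num at hk
    linear_combination 4 * hk
  exact_mod_cast this

end IsCharacteristic

end CharacteristicNorms

section NormCounts

variable {n : ℕ}

lemma normOf_eq_norm_sq (x : EuclideanSpace ℝ (Fin n)) : normOf x = ‖x‖ ^ 2 :=
  real_inner_self_eq_norm_sq x

/-- The series `∑ₖ #{y ∈ S | (y, y) = c + k} Xᵏ`: the theta series of `S` without its leading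
exponent `c`. -/
def normCountSeries (S : Set (EuclideanSpace ℝ (Fin n))) (c : ℝ) : ℤ⟦X⟧ :=
  PowerSeries.mk fun k => (numVecsOfNorm S (c + k) : ℤ)

variable {L : Submodule ℤ (EuclideanSpace ℝ (Fin n))} {S : Set (EuclideanSpace ℝ (Fin n))}
  {v : EuclideanSpace ℝ (Fin n)}

lemma fiberCountSeries_eq_normCountSeries (hS : ∀ y, y ∈ S ↔ y - v ∈ L) {c : ℝ} {e : L → ℕ}
    (he : ∀ x : L, ‖(x : EuclideanSpace ℝ (Fin n)) + v‖ ^ 2 = c + e x) :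
    fiberCountSeries e = normCountSeries S c := by
  ext k
  rw [fiberCountSeries, normCountSeries, coeff_mk, coeff_mk, numVecsOfNorm,
    ← Set.ncard_image_of_injective {x | e x = k}
      ((add_left_injective v).comp Subtype.val_injective)]
  congr 2
  ext y
  constructor
  · rintro ⟨x, rfl, rfl⟩
    exact ⟨(hS _).2 (by simp), by simp [normOf_eq_norm_sq, he]⟩
  · rintro ⟨hy, hk⟩
    refine ⟨⟨y - v, (hS y).1 hy⟩, ?_, sub_add_cancel y v⟩
    simpa [hk, ← normOf_eq_norm_sq, eq_comm] using he ⟨y - v, (hS y).1 hy⟩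

lemma coeff_normCountSeries_of_lt {r : ℝ} (hmin : ∀ x ∈ L, x ≠ 0 → r ≤ ‖x‖ ^ 2) {k : ℕ}
    (hk : k < r) : coeff k (normCountSeries (L : Set (EuclideanSpace ℝ (Fin n))) 0) =
      if k = 0 then 1 else 0 := by
  have hzero {x : EuclideanSpace ℝ (Fin n)} (hx : x ∈ L) (hxk : ‖x‖ ^ 2 = k) : x = 0 := by
    by_contra hx₀
    exact ((hmin x hx hx₀).trans_eq hxk).not_gt hk
  have hset : {x ∈ (L : Set (EuclideanSpace ℝ (Fin n))) | normOf x = 0 + k} =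
      if k = 0 then {0} else ∅ := by
    ext x
    split_ifs with hk₀ <;> simp only [normOf_eq_norm_sq, zero_add, Set.mem_ofPred_eq,
      Set.mem_singleton_iff, Set.mem_empty_iff_false, iff_false, SetLike.mem_coe]
    · exact ⟨fun h => hzero h.1 h.2, by rintro rfl; simp [hk₀]⟩
    · rintro ⟨hx, hxk⟩
      rw [hzero hx hxk, norm_zero, zero_pow two_ne_zero, eq_comm, Nat.cast_eq_zero] at hxk
      exact hk₀ hxk
  rw [normCountSeries, coeff_mk, numVecsOfNorm, hset]
  split_ifs <;> simp

variable [DiscreteTopology L]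

lemma finite_setOf_normOf_eq (hS : ∀ y, y ∈ S ↔ y - v ∈ L) (r : ℝ) :
    {y ∈ S | normOf y = r}.Finite := by
  have : DiscreteTopology L.toAddSubgroup := ‹DiscreteTopology L›
  have hfin := Metric.finite_isBounded_inter_isClosed
    (SetLike.isDiscrete_iff_discreteTopology.2 ‹_›)
    (Metric.isBounded_ball (x := -v) (r := √r + 1))
    (AddSubgroup.isClosed_of_discrete (H := L.toAddSubgroup))
  refine (hfin.image (· + v)).subset ?_
  rintro y ⟨hy, rfl⟩
  refine ⟨y - v, ⟨?_, (hS y).1 hy⟩, sub_add_cancel y v⟩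
  simp [normOf_eq_norm_sq]

lemma numVecsOfNorm_eq_zero_iff (hS : ∀ y, y ∈ S ↔ y - v ∈ L) {r : ℝ} :
    numVecsOfNorm S r = 0 ↔ ∀ y ∈ S, normOf y ≠ r := by
  rw [numVecsOfNorm, Set.ncard_eq_zero (finite_setOf_normOf_eq hS r),
    Set.sep_eq_empty_iff_mem_false]

lemma hasExpansion_latticeTheta (hS : ∀ y, y ∈ S ↔ y - v ∈ L) {c : ℝ}
    (hc : ∀ y ∈ S, ∃ k : ℕ, ‖y‖ ^ 2 = c + k) (N : ℕ) :
    HasExpansion N (fun τ => cexp (-(Real.pi * Complex.I * τ * c)) * latticeTheta L v τ)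
      (normCountSeries S c) := by
  choose e he using fun x : L => hc (x + v) ((hS _).2 (by simp))
  have hterm (τ : ℂ) (x : L) : 𝕢 τ ^ e x = cexp (-(Real.pi * Complex.I * τ * c)) *
      cexp (Real.pi * Complex.I * τ * (‖(x : EuclideanSpace ℝ (Fin n)) + v‖ ^ 2 : ℝ)) := by
    rw [nome_eq, ← Complex.exp_nat_mul, ← Complex.exp_add, he]
    push_cast
    ring_nf
  have hsummable (τ : ℂ) (hτ : τ ∈ ℍₒ) : Summable fun x => 𝕢 τ ^ e x := by
    simp only [hterm]
    refine Summable.mul_left _ (.of_norm ?_)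
    simpa only [norm_cexp_pi_mul_I_mul] using
      summable_exp_neg_mul_norm_add_sq L (mul_pos Real.pi_pos hτ) v
  rw [← fiberCountSeries_eq_normCountSeries hS he]
  simpa only [latticeTheta, ← tsum_mul_left, ← hterm] using hasExpansion_tsum_nome_pow hsummable N

lemma IsSelfDual.hasExpansion_latticeTheta_zero (hL : IsSelfDual L) (N : ℕ) :
    HasExpansion N (latticeTheta L 0)
      (normCountSeries (L : Set (EuclideanSpace ℝ (Fin n))) 0) := by
  refine (hasExpansion_latticeTheta (L := L) (v := 0) (fun y => by simp) (fun y hy => ?_) N)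
    |>.congr_fun (.of_forall fun τ => by simp)
  obtain ⟨m, hm⟩ := hL.exists_norm_sq_eq_intCast hy
  lift m to ℕ using by exact_mod_cast hm ▸ sq_nonneg ‖y‖
  exact ⟨m, by simpa using hm⟩

end NormCounts

section Unimodular

variable {n : ℕ}

lemma coe_dualSubmodule_span (L : Set (EuclideanSpace ℝ (Fin n))) :
    (LinearMap.BilinForm.dualSubmodule (innerₗ (EuclideanSpace ℝ (Fin n))) (Submodule.span ℤ L) :
      Set (EuclideanSpace ℝ (Fin n))) = dualSet L := by
  ext x
  have h : L ⊆ (1 : Submodule ℤ ℝ).comap ((innerₗ _ x).restrictScalars ℤ) ↔ x ∈ dualSet L := by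
    simp [Set.subset_def, dualSet, Submodule.mem_one, eq_comm]
  rw [← h, ← Submodule.span_le]
  rfl

lemma IsUnimodularLattice.exists_isSelfDual {L : Set (EuclideanSpace ℝ (Fin n))}
    (hL : IsUnimodularLattice L) :
    ∃ M : Submodule ℤ (EuclideanSpace ℝ (Fin n)), IsSelfDual M ∧ (M : Set _) = L := by
  have hdual := (coe_dualSubmodule_span L).trans hL.symm
  have hspan := congrArg (Submodule.span ℤ) hdual
  rw [Submodule.span_eq] at hspan
  exact ⟨Submodule.span ℤ L, hspan, by rw [← hspan, hdual]⟩

variable {L : Submodule ℤ (EuclideanSpace ℝ (Fin n))} {w y : EuclideanSpace ℝ (Fin n)}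

-- Any two vectors of odd norm differ by a vector of even norm.
lemma IsSelfDual.mem_of_mem_dualSet_evenSublattice (hL : IsSelfDual L)
    {z : EuclideanSpace ℝ (Fin n)} (hz : z ∈ L) {m : ℤ} (hm : Odd m) (hzm : ‖z‖ ^ 2 = m)
    (hy : y ∈ dualSet (evenSublattice L)) {l : ℤ} (hyz : ⟪y, z⟫ = l) : y ∈ L := by
  refine hL.mem_iff.2 fun x hx => ?_
  obtain ⟨k, hk⟩ := hL.exists_norm_sq_eq_intCast hx
  obtain ⟨q, rfl | rfl⟩ := k.even_or_odd'
  · exact hy x ⟨hx, q, by rw [normOf_eq_norm_sq, hk]; push_cast; rfl⟩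
  · obtain ⟨p, rfl⟩ := hm
    obtain ⟨j, hj⟩ := hL.mem_iff.1 hx z hz
    obtain ⟨i, hi⟩ := hy (x - z) ⟨L.sub_mem hx hz, q + p + 1 - j, by
      rw [normOf_eq_norm_sq, norm_sub_sq_real, hk, hzm, hj]; push_cast; ring⟩
    refine ⟨i + l, ?_⟩
    rw [inner_sub_right, hyz] at hi
    push_cast
    linarith

lemma IsCharacteristic.half_smul_mem_shadow (hw : IsCharacteristic L w) (hL : IsSelfDual L)
    (hodd : IsOddLattice (L : Set (EuclideanSpace ℝ (Fin n)))) :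
    (1 / 2 : ℝ) • w ∈ shadow (L : Set (EuclideanSpace ℝ (Fin n))) := by
  have hinner {x : EuclideanSpace ℝ (Fin n)} (hx : x ∈ L) :
      ∃ k : ℤ, ⟪(1 / 2 : ℝ) • w, x⟫ = ‖x‖ ^ 2 / 2 + k := by
    obtain ⟨k, hk⟩ := hw x hx
    exact ⟨k, by rw [real_inner_smul_left, real_inner_comm, hk]; ring⟩
  refine ⟨fun x ⟨hx, m, hm⟩ => ?_, fun hmem => ?_⟩
  · obtain ⟨k, hk⟩ := hinner hx
    exact ⟨m + k, by rw [hk, ← normOf_eq_norm_sq, hm]; push_cast; ring⟩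
  · obtain ⟨z, hz, m, hm, hzm⟩ := hodd
    obtain ⟨k, hk⟩ := hinner hz
    obtain ⟨l, hl⟩ := hL.mem_iff.1 hmem z hz
    rw [← normOf_eq_norm_sq, hzm, hl] at hk
    have heven : m = 2 * (l - k) := by
      have : (m : ℝ) = 2 * (l - k) := by linarith
      exact_mod_cast this
    exact Int.not_odd_iff_even.2 ⟨l - k, by omega⟩ hm

lemma exists_inner_eq_add_half_of_mem_shadow (hL : IsSelfDual L)
    (hy : y ∈ shadow (L : Set (EuclideanSpace ℝ (Fin n)))) {z : EuclideanSpace ℝ (Fin n)}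
    (hz : z ∈ L) {m : ℤ} (hm : Odd m) (hzm : ‖z‖ ^ 2 = m) : ∃ k : ℤ, ⟪y, z⟫ = k + 1 / 2 := by
  obtain ⟨l, hl⟩ := hy.1 ((2 : ℤ) • z) ⟨L.smul_mem 2 hz, 2 * m, by
    rw [normOf_eq_norm_sq, ← Int.cast_smul_eq_zsmul ℝ, norm_smul, mul_pow, hzm]; norm_num; ring⟩
  rw [← Int.cast_smul_eq_zsmul ℝ, real_inner_smul_right] at hl
  obtain ⟨k, rfl | rfl⟩ := l.even_or_odd'
  · refine absurd (hL.mem_of_mem_dualSet_evenSublattice hz hm hzm hy.1 (l := k) ?_) hy.2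
    push_cast at hl
    linarith
  · refine ⟨k, ?_⟩
    push_cast at hl
    linarith

lemma IsCharacteristic.mem_shadow_iff (hw : IsCharacteristic L w) (hL : IsSelfDual L)
    (hodd : IsOddLattice (L : Set (EuclideanSpace ℝ (Fin n)))) :
    y ∈ shadow (L : Set (EuclideanSpace ℝ (Fin n))) ↔ y - (1 / 2 : ℝ) • w ∈ L := by
  have hhalf := hw.half_smul_mem_shadow hL hodd
  constructor
  · intro hy
    obtain ⟨z, hz, m, hm, hzm⟩ := hodd
    rw [normOf_eq_norm_sq] at hzm
    obtain ⟨k, hk⟩ := exists_inner_eq_add_half_of_mem_shadow hL hy hz hm hzm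
    obtain ⟨l, hl⟩ := exists_inner_eq_add_half_of_mem_shadow hL hhalf hz hm hzm
    refine hL.mem_of_mem_dualSet_evenSublattice hz hm hzm (l := k - l) (fun x hx => ?_) ?_
    · obtain ⟨i, hi⟩ := hy.1 x hx
      obtain ⟨j, hj⟩ := hhalf.1 x hx
      exact ⟨i - j, by rw [inner_sub_left, hi, hj]; push_cast; rfl⟩
    · rw [inner_sub_left, hk, hl]
      push_cast
      ring
  · refine fun hx => ⟨fun x hx' => ?_, fun hy => hhalf.2 (by simpa using L.sub_mem hy hx)⟩
    obtain ⟨i, hi⟩ := hL.mem_iff.1 hx x hx'.1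
    obtain ⟨j, hj⟩ := hhalf.1 x hx'
    exact ⟨i + j, by rw [inner_sub_left, hj] at hi; push_cast; linarith⟩

end Unimodular

section DimensionFortyThree

local notation "ℝ⁴³" => EuclideanSpace ℝ (Fin 43)

variable {L : Submodule ℤ (ℝ⁴³)}

namespace IsSelfDual

lemma exists_norm_sq_eq_of_mem_shadow (hL : IsSelfDual L)
    (hodd : IsOddLattice (L : Set ℝ⁴³))
    (hmin : ∀ x ∈ L, x ≠ 0 → 4 ≤ ‖x‖ ^ 2) {y : ℝ⁴³}
    (hy : y ∈ shadow (L : Set ℝ⁴³)) :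
    ∃ k : ℕ, ‖y‖ ^ 2 = 11 / 4 + 2 * k := by
  have := discreteTopology_of_le_norm_sq four_pos hmin
  have := hL.isZLattice
  obtain ⟨w, hw⟩ := hL.exists_isCharacteristic
  have hu := hw.two_smul_add hL ((hw.mem_shadow_iff hL hodd).1 hy)
  rw [smul_sub, smul_smul, mul_one_div_cancel two_ne_zero, one_smul, sub_add_cancel] at hu
  obtain ⟨k, hk⟩ := hu.exists_norm_sq_eq_finrank_add hL
  rw [finrank_euclideanSpace_fin] at hk
  have hu₀ : (2 : ℝ) • y ≠ 0 := by
    intro h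
    rw [h, norm_zero, zero_pow two_ne_zero] at hk
    norm_cast at hk
    omega
  have hk₀ : (4 : ℤ) ≤ 43 + 8 * k := mod_cast (hmin _ (hu.mem hL) hu₀).trans_eq hk
  obtain ⟨l, hl⟩ := Int.eq_ofNat_of_zero_le (a := k + 4) (by omega)
  refine ⟨l, ?_⟩
  have hl' : (l : ℝ) = k + 4 := mod_cast hl.symm
  rw [norm_smul, mul_pow, Real.norm_two] at hk
  push_cast at hk
  linarith

lemma numVecsOfNorm_relations (hL : IsSelfDual L) (hodd : IsOddLattice (L : Set ℝ⁴³))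
    (hmin : ∀ x ∈ L, x ≠ 0 → 4 ≤ ‖x‖ ^ 2) :
    numVecsOfNorm (L : Set ℝ⁴³) 4 = 9030 + 32 * numVecsOfNorm (shadow (L : Set ℝ⁴³)) (11 / 4) ∧
      53 * numVecsOfNorm (shadow (L : Set ℝ⁴³)) (11 / 4) +
        numVecsOfNorm (shadow (L : Set ℝ⁴³)) (19 / 4) = 660480 := by
  have := discreteTopology_of_le_norm_sq four_pos hmin
  have := hL.isZLattice
  obtain ⟨w, hw⟩ := hL.exists_isCharacteristic
  have hpair := isThetaPair_latticeTheta hL hw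
  rw [finrank_euclideanSpace_fin] at hpair
  have hF := hL.hasExpansion_latticeTheta_zero 7
  have hG := hasExpansion_latticeTheta (c := 11 / 4) (fun _ => hw.mem_shadow_iff hL hodd)
    (fun y hy => by
      obtain ⟨k, hk⟩ := hL.exists_norm_sq_eq_of_mem_shadow hodd hmin hy
      exact ⟨2 * k, mod_cast hk⟩) 7
  have hV (τ : ℂ) : latticeTheta L ((1 / 2 : ℝ) • w) τ = cexp (Real.pi * Complex.I * τ * (11 / 4)) *
      (cexp (-(Real.pi * Complex.I * τ * (11 / 4 : ℝ))) *
        latticeTheta L ((1 / 2 : ℝ) • w) τ) := by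
    rw [← mul_assoc, ← Complex.exp_add]
    simp
  have h₄ := hpair.coeff_four_relation hV hF hG
  have h₆ := hpair.coeff_six_relation hV hF hG
  have hcoeff (k : ℕ) (hk : k < 4) := coeff_normCountSeries_of_lt hmin (k := k) (mod_cast hk)
  rw [hcoeff 0 (by norm_num), hcoeff 1 (by norm_num), hcoeff 2 (by norm_num),
    hcoeff 3 (by norm_num)] at h₄ h₆
  norm_num [normCountSeries] at h₄ h₆
  exact ⟨mod_cast h₄, mod_cast h₆⟩

lemma hasShadowMinNorm_nineteen_div_four_iff (hL : IsSelfDual L) (hodd : IsOddLattice (L : Set ℝ⁴³))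
    (hmin : ∀ x ∈ L, x ≠ 0 → 4 ≤ ‖x‖ ^ 2) :
    HasShadowMinNorm (L : Set ℝ⁴³) (19 / 4) ↔
      numVecsOfNorm (shadow (L : Set ℝ⁴³)) (11 / 4) = 0 := by
  have := discreteTopology_of_le_norm_sq four_pos hmin
  have := hL.isZLattice
  obtain ⟨w, hw⟩ := hL.exists_isCharacteristic
  rw [numVecsOfNorm_eq_zero_iff fun _ => hw.mem_shadow_iff hL hodd]
  refine ⟨fun h y hy hy' => ?_, fun h => ⟨?_, ?_⟩⟩
  · have := h.2 ⟨y, hy, hy'⟩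
    norm_num at this
  · have hcard := (hL.numVecsOfNorm_relations hodd hmin).2
    rw [(numVecsOfNorm_eq_zero_iff fun _ => hw.mem_shadow_iff hL hodd).2 h] at hcard
    exact Set.nonempty_of_ncard_ne_zero (s := {y ∈ shadow (L : Set ℝ⁴³) | normOf y = 19 / 4})
      fun h₀ => by simp [numVecsOfNorm, h₀] at hcard
  · rintro _ ⟨y, hy, rfl⟩
    obtain ⟨k, hk⟩ := hL.exists_norm_sq_eq_of_mem_shadow hodd hmin hy
    have hk₀ : k ≠ 0 := by
      rintro rfl
      exact h y hy (by simp [normOf_eq_norm_sq, hk])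
    have : (1 : ℝ) ≤ k := mod_cast Nat.one_le_iff_ne_zero.2 hk₀
    rw [normOf_eq_norm_sq, hk]
    linarith

end IsSelfDual

end DimensionFortyThree

lemma hasSigma_iff {n : ℕ} {L : Set (EuclideanSpace ℝ (Fin n))} {r : ℝ} :
    HasSigma L r ↔ HasShadowMinNorm L (r / 4) := by
  refine ⟨?_, fun h => ⟨r / 4, h, by ring⟩⟩
  rintro ⟨s, hs, rfl⟩
  rwa [mul_div_cancel_left₀ s four_ne_zero]

theorem kissing_number_dim43 {L : Set (EuclideanSpace ℝ (Fin 43))}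
    (huni : IsUnimodularLattice L) (hodd : IsOddLattice L) (hmin : HasMinNorm L 4) :
    numVecsOfNorm L 4 = 9030 ↔ HasSigma L 19 := by
  obtain ⟨M, hM, rfl⟩ := huni.exists_isSelfDual
  have hmin' (x) (hx : x ∈ M) (hx₀ : x ≠ 0) : 4 ≤ ‖x‖ ^ 2 :=
    hmin.2 ⟨x, hx, hx₀, normOf_eq_norm_sq x⟩
  have hcount := (hM.numVecsOfNorm_relations hodd hmin').1
  rw [hasSigma_iff, hM.hasShadowMinNorm_nineteen_div_four_iff hodd hmin']
  omega
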